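/- arXiv:1210.0098 — 7 statements merged into one kernel-verified Lean document; each statement's English description precedes it below -/
import Mathlib

section
/- (Gordon's strong force lemma.) Let V : ℝ^n \ {0} → ℝ be continuous with V(x) ≤ 0 for all x ≠ 0, and suppose V satisfies the strong force condition: there exist r₀ > 0 and a continuously differentiable function U on {x : 0 < |x| < r₀} such that U(x) → −∞ as |x| → 0 and −V(x) ≥ |∇U(x)|² for all 0 < |x| < r₀. Let x_k : ℝ → ℝ^n be continuously differentiable 1-periodic curves with x_k(t) ≠ 0 for all t, and let x : ℝ → ℝ^n be a continuous 1-periodic curve, such that x_k → x uniformly on [0,1] and ∫₀¹ |ẋ_k(t)|² dt ≤ M for all k and some constant M. If there exist t₀ with x(t₀) = 0 and t₁ with x(t₁) ≠ 0, then ∫₀¹ V(x_k(t)) dt → −∞ as k → ∞. -/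
/-!
The idea is to bound the growth of `U` along a curve by its energy. While a curve `y` stays in
the punctured ball of radius `r₀`, the strong force condition gives
`(U ∘ y)' ≤ ‖∇U(y)‖ ‖y'‖ ≤ ‖∇U(y)‖² + ‖y'‖² ≤ -V(y) + ‖y'‖²`.
Integrating from a time `t₀` at which `y` is inside the sphere of radius `ρ < r₀` to the first
later time at which `y` reaches that sphere, and using `V ≤ 0` on the rest of the period, yields
`min_{‖ξ‖ = ρ} U - U (y t₀) ≤ -∫ V(y) + ∫ ‖y'‖²` over one period (`exists_sphere_sub_le_integral`).

By periodicity the noncollision time `t₁` may be taken in `(t₀, t₀ + 1)`. With `ρ` less than both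
`r₀` and `‖x t₁‖`, the estimate applies to `x_k` for large `k`. The minimum over the sphere does
not depend on `k` and the kinetic energy is at most `M`, whereas `U (x_k t₀) → -∞` because
`x_k t₀ → x t₀ = 0`.
-/

open Set Filter Topology

/-- First hitting time of the level `ρ`. -/
lemma exists_first_hitting_time {f : ℝ → ℝ} (hf : Continuous f) {a b ρ : ℝ} (hab : a ≤ b)
    (ha : f a < ρ) (hb : ρ ≤ f b) :
    ∃ c ∈ Icc a b, f c = ρ ∧ ∀ t ∈ Icc a c, f t ≤ ρ := by
  have hcpt : IsCompact (Icc a b ∩ {t | f t = ρ}) :=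
    isCompact_Icc.inter_right (isClosed_eq hf continuous_const)
  obtain ⟨s, hs, hsρ⟩ := intermediate_value_Icc hab hf.continuousOn ⟨ha.le, hb⟩
  obtain ⟨c, ⟨hc, hcρ⟩, hmin⟩ := hcpt.exists_isLeast ⟨s, hs, hsρ⟩
  refine ⟨c, hc, hcρ, fun t ht => ?_⟩
  by_contra! hlt
  obtain ⟨u, hu, huρ⟩ := intermediate_value_Icc ht.1 hf.continuousOn ⟨ha.le, hlt.le⟩
  have hcu : c ≤ u := hmin ⟨⟨hu.1, hu.2.trans (ht.2.trans hc.2)⟩, huρ⟩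
  have htc : t = c := le_antisymm ht.2 (hcu.trans hu.2)
  rw [htc, hcρ] at hlt
  exact lt_irrefl _ hlt

lemma fderiv_apply_le_neg_add_sq {n : ℕ} {V U : EuclideanSpace ℝ (Fin n) → ℝ}
    {ξ v : EuclideanSpace ℝ (Fin n)} (h : -V ξ ≥ ‖gradient U ξ‖ ^ 2) :
    fderiv ℝ U ξ v ≤ -V ξ + ‖v‖ ^ 2 := by
  have hnorm : ‖gradient U ξ‖ = ‖fderiv ℝ U ξ‖ := by
    simp [gradient]
  rw [hnorm] at h
  have h₁ := (le_abs_self _).trans ((fderiv ℝ U ξ).le_opNorm v)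
  nlinarith [sq_nonneg (‖fderiv ℝ U ξ‖ - ‖v‖), sq_nonneg ‖fderiv ℝ U ξ‖, sq_nonneg ‖v‖]

/-- The energy of a curve over a unit time interval dominates the increase of `U` along it, from
its initial point to its first hitting point on the sphere of radius `ρ`. -/
lemma exists_sphere_sub_le_integral {n : ℕ} {V U : EuclideanSpace ℝ (Fin n) → ℝ}
    (hV_cont : ContinuousOn V {ξ | ξ ≠ 0})
    (hV_nonpos : ∀ ξ : EuclideanSpace ℝ (Fin n), ξ ≠ 0 → V ξ ≤ 0)
    {r₀ : ℝ} (hU_C1 : ContDiffOn ℝ 1 U {ξ | 0 < ‖ξ‖ ∧ ‖ξ‖ < r₀})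
    (hU_dom : ∀ ξ : EuclideanSpace ℝ (Fin n), 0 < ‖ξ‖ → ‖ξ‖ < r₀ →
      -V ξ ≥ ‖gradient U ξ‖ ^ 2)
    {y : ℝ → EuclideanSpace ℝ (Fin n)} (hy : ContDiff ℝ 1 y) (hy_ne : ∀ t, y t ≠ 0)
    {ρ : ℝ} (hρ : ρ < r₀) {t₀ t₁ : ℝ} (h01 : t₀ ≤ t₁) (h10 : t₁ ≤ t₀ + 1)
    (h₀ : ‖y t₀‖ < ρ) (h₁ : ρ ≤ ‖y t₁‖) :
    ∃ ξ, ‖ξ‖ = ρ ∧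
      U ξ - U (y t₀) ≤
        -(∫ t in t₀..t₀ + 1, V (y t)) + ∫ t in t₀..t₀ + 1, ‖deriv y t‖ ^ 2 := by
  obtain ⟨b, hb, hbρ, hle⟩ := exists_first_hitting_time (f := fun t => ‖y t‖)
    hy.continuous.norm h01 h₀ h₁
  have hVy : Continuous fun t => V (y t) :=
    hV_cont.comp_continuous hy.continuous hy_ne
  have hy' : Continuous fun t => ‖deriv y t‖ ^ 2 :=
    (hy.continuous_deriv le_rfl).norm.pow 2
  have hopen : IsOpen {ξ : EuclideanSpace ℝ (Fin n) | 0 < ‖ξ‖ ∧ ‖ξ‖ < r₀} :=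
    (isOpen_lt continuous_const continuous_norm).inter (isOpen_lt continuous_norm continuous_const)
  have hmem : ∀ t ∈ Icc t₀ b, 0 < ‖y t‖ ∧ ‖y t‖ < r₀ := fun t ht =>
    ⟨norm_pos_iff.2 (hy_ne t), (hle t ht).trans_lt hρ⟩
  have hderiv : ∀ t ∈ Icc t₀ b,
      HasDerivAt (fun s => U (y s)) (fderiv ℝ U (y t) (deriv y t)) t := fun t ht =>
    (((hU_C1.differentiableOn one_ne_zero).differentiableAt
      (hopen.mem_nhds (hmem t ht))).hasFDerivAt).comp_hasDerivAt t
      ((hy.differentiable one_ne_zero) t).hasDerivAt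
  refine ⟨y b, hbρ, ?_⟩
  calc U (y b) - U (y t₀) ≤ ∫ t in t₀..b, (-V (y t) + ‖deriv y t‖ ^ 2) :=
        intervalIntegral.sub_le_integral_of_hasDeriv_right_of_le hb.1
          (fun t ht => (hderiv t ht).continuousAt.continuousWithinAt)
          (fun t ht => (hderiv t (Ioo_subset_Icc_self ht)).hasDerivWithinAt)
          ((hVy.neg.add hy').continuousOn.integrableOn_Icc)
          (fun t ht => fderiv_apply_le_neg_add_sq
            (hU_dom _ (hmem t (Ioo_subset_Icc_self ht)).1 (hmem t (Ioo_subset_Icc_self ht)).2))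
    _ ≤ ∫ t in t₀..t₀ + 1, (-V (y t) + ‖deriv y t‖ ^ 2) := by
        refine intervalIntegral.integral_mono_interval le_rfl hb.1 (hb.2.trans h10)
          (Eventually.of_forall fun t => ?_) ((hVy.neg.add hy').intervalIntegrable _ _)
        exact add_nonneg (neg_nonneg.2 (hV_nonpos _ (hy_ne t))) (sq_nonneg _)
    _ = _ := by
        rw [intervalIntegral.integral_add (f := fun t => -V (y t))
          (hVy.neg.intervalIntegrable _ _) (hy'.intervalIntegrable _ _),
          intervalIntegral.integral_neg]

/-- **Gordon's strong force lemma**. If `V ≤ 0` satisfies the strong force condition and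
`x_k` are 1-periodic non-collision C¹ curves with bounded kinetic energy converging
uniformly on `[0,1]` to a curve `x` which touches the singularity (but is not identically
at it), then `∫₀¹ V(x_k) → -∞`. -/
theorem gordon_strong_force_lemma
    (n : ℕ)
    (V : EuclideanSpace ℝ (Fin n) → ℝ)
    (hV_cont : ContinuousOn V {ξ | ξ ≠ 0})
    (hV_nonpos : ∀ ξ : EuclideanSpace ℝ (Fin n), ξ ≠ 0 → V ξ ≤ 0)
    -- strong force condition
    (r₀ : ℝ) (hr₀ : 0 < r₀)
    (U : EuclideanSpace ℝ (Fin n) → ℝ)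
    (hU_C1 : ContDiffOn ℝ 1 U {ξ | 0 < ‖ξ‖ ∧ ‖ξ‖ < r₀})
    (hU_atBot : Filter.Tendsto U (nhdsWithin 0 {ξ | ξ ≠ 0}) Filter.atBot)
    (hU_dom : ∀ ξ : EuclideanSpace ℝ (Fin n), 0 < ‖ξ‖ → ‖ξ‖ < r₀ →
      -V ξ ≥ ‖gradient U ξ‖ ^ 2)
    -- the curves
    (x' : ℕ → ℝ → EuclideanSpace ℝ (Fin n))
    (hx'_C1 : ∀ k, ContDiff ℝ 1 (x' k))
    (hx'_per : ∀ k, ∀ t : ℝ, x' k (t + 1) = x' k t)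
    (hx'_ne : ∀ k, ∀ t : ℝ, x' k t ≠ 0)
    (x : ℝ → EuclideanSpace ℝ (Fin n))
    (hx_cont : Continuous x)
    (hx_per : ∀ t : ℝ, x (t + 1) = x t)
    (hconv : TendstoUniformlyOn x' x Filter.atTop (Set.Icc 0 1))
    (M : ℝ)
    (hM : ∀ k, (∫ t in (0:ℝ)..1, ‖deriv (x' k) t‖ ^ 2) ≤ M)
    (t₀ : ℝ) (ht₀ : x t₀ = 0)
    (t₁ : ℝ) (ht₁ : x t₁ ≠ 0) :
    Filter.Tendsto (fun k => ∫ t in (0:ℝ)..1, V (x' k t)) Filter.atTop Filter.atBot := by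
  have hper : Function.Periodic x 1 := hx_per
  have hper' : ∀ k, Function.Periodic (x' k) 1 := hx'_per
  have hlim : ∀ s, Tendsto (fun k => x' k s) atTop (𝓝 (x s)) := fun s => by
    have h := hconv.tendsto_at (x := Int.fract s) ⟨Int.fract_nonneg s, (Int.fract_lt_one s).le⟩
    have hfr : ∀ {f : ℝ → EuclideanSpace ℝ (Fin n)}, Function.Periodic f 1 →
        f (Int.fract s) = f s := fun hf => by
      have h := hf.sub_zsmul_eq (x := s) ⌊s⌋
      rwa [zsmul_one] at h
    simpa only [hfr hper, hfr (hper' _)] using h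
  -- Translate `t₁` by an integer into `[t₀, t₀ + 1)`.
  obtain ⟨s, hs, hxs⟩ : ∃ s ∈ Ico t₀ (t₀ + 1), x t₁ = x s :=
    hper.exists_mem_Ico one_pos t₁ t₀
  rw [hxs] at ht₁
  have hs_pos : 0 < ‖x s‖ := norm_pos_iff.2 ht₁
  obtain ⟨ρ, hρ, hρ_lt⟩ := exists_between (lt_min hr₀ hs_pos)
  obtain ⟨hρr, hρs⟩ := lt_min_iff.1 hρ_lt
  obtain ⟨c, hc⟩ : BddBelow (U '' Metric.sphere 0 ρ) := by
    refine ((isCompact_sphere _ _).image_of_continuousOn (hU_C1.continuousOn.mono ?_)).bddBelow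
    intro ξ hξ
    rw [mem_sphere_zero_iff_norm] at hξ
    exact ⟨hξ ▸ hρ, hξ ▸ hρr⟩
  have hU_lim : Tendsto (fun k => U (x' k t₀)) atTop atBot := by
    refine hU_atBot.comp (tendsto_nhdsWithin_iff.2 ⟨?_, Eventually.of_forall fun k => hx'_ne k t₀⟩)
    simpa only [ht₀] using hlim t₀
  refine tendsto_atBot_mono' atTop ?_ (tendsto_atBot_add_const_right atTop (M - c) hU_lim)
  have hsmall : ∀ᶠ k in atTop, ‖x' k t₀‖ < ρ :=
    (hlim t₀).norm.eventually_lt_const (by simpa [ht₀] using hρ)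
  have hlarge : ∀ᶠ k in atTop, ρ < ‖x' k s‖ := (hlim s).norm.eventually_const_lt hρs
  filter_upwards [hsmall, hlarge] with k hk₀ hk₁
  obtain ⟨ξ, hξ, hest⟩ := exists_sphere_sub_le_integral hV_cont hV_nonpos hU_C1 hU_dom
    (hx'_C1 k) (hx'_ne k) hρr hs.1 hs.2.le hk₀ hk₁.le
  have hcξ : c ≤ U ξ := hc ⟨ξ, mem_sphere_zero_iff_norm.2 hξ, rfl⟩
  have hVper : Function.Periodic (fun t => V (x' k t)) 1 := fun t => by simp only [hx'_per]
  have hdper : Function.Periodic (fun t => ‖deriv (x' k) t‖ ^ 2) 1 := fun t => by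
    have hshift : (fun t => x' k (t + 1)) = x' k := funext (hx'_per k)
    have : deriv (x' k) (t + 1) = deriv (x' k) t := by
      rw [← deriv_comp_add_const, hshift]
    simp only [this]
  have hVint := hVper.intervalIntegral_add_eq t₀ 0
  have hdint := hdper.intervalIntegral_add_eq t₀ 0
  rw [zero_add] at hVint hdint
  rw [hVint, hdint] at hest
  linarith [hM k]
end

section
/- Let N ≥ 2, m_1,…,m_N > 0, h ∈ ℝ, and let V(u_1,…,u_N) = (1/2) Σ_{1≤i≠j≤N} V_{ij}(u_i − u_j) with each V_{ij} : ℝ^n \ {0} → ℝ continuously differentiable. Let ũ = (ũ_1,…,ũ_N) : ℝ → (ℝ^n)^N be twice continuously differentiable and 1-periodic with ũ_i(t) ≠ ũ_j(t) for all t and all i ≠ j. Suppose ũ is a critical point of the functional f(u) = (1/2)(∫₀¹ Σ_{i=1}^N m_i |u̇_i(t)|² dt)·(∫₀¹ (h − V(u(t))) dt) in the sense that for every continuously differentiable 1-periodic v : ℝ → (ℝ^n)^N, the function s ↦ f(ũ + s v) has derivative 0 at s = 0, and suppose f(ũ) > 0. Define T > 0 by 1/T² = (∫₀¹ (h − V(ũ(t)))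 dt) / ((1/2)∫₀¹ Σ_{i=1}^N m_i |ũ̇_i(t)|² dt). Then q(t) := ũ(t/T) is a non-constant T-periodic non-collision solution of (Ph): for all t and all i, m_i q̈_i(t) + ∇_{u_i}V(q(t)) = 0 and (1/2) Σ_{i=1}^N m_i |q̇_i(t)|² + V(q(t)) = h. -/
/-!
The functional is a product, `f = ½ K P`, with `K` the kinetic integral and `P = ∫ (h - V)`.
Differentiating both factors under the integral sign (`hasDerivAt_integral_variation`) and using
`P = K / (2 T²)`, which is the definition of `T`, criticality becomes the weak equation
`∫ ∑ (mᵢ / T²) ⟪ũᵢ', vᵢ'⟫ = ∫ ∑ ⟪∇ᵢV(ũ), vᵢ⟫` for all `C¹` periodic `v`. The periodic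
du Bois-Reymond lemma (`periodic_duBoisReymond`), applied to variations moving a single body,
upgrades it to `(mᵢ / T²) ũᵢ'' = -∇ᵢV(ũ)`, the rescaled equation of motion.

It follows that the energy `(1 / (2 T²)) ∑ mᵢ |ũᵢ'|² + V(ũ)` is constant. Its mean over one
period is `K / (2 T²) + h - P = h`, so the constant is `h`. Non-constancy holds because a
constant curve would give `K = 0`, contradicting `f(ũ) > 0`.
-/

open Finset

/-- A primitive of a continuous `1`-periodic function of zero mean is again `1`-periodic. -/
lemma periodic_primitive {E : Type*} [NormedAddCommGroup E] [NormedSpace ℝ E] [CompleteSpace E]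
    {b : ℝ → E} (hb : Continuous b) (hper : Function.Periodic b 1)
    (hmean : ∫ t in (0:ℝ)..1, b t = 0) :
    Function.Periodic (fun t => ∫ s in (0:ℝ)..t, b s) 1 := by
  intro t
  have h1 := intervalIntegral.integral_add_adjacent_intervals
    (hb.intervalIntegrable (μ := MeasureTheory.volume) 0 t) (hb.intervalIntegrable t (t + 1))
  have h2 := hper.intervalIntegral_add_eq t 0
  rw [zero_add, hmean] at h2
  simp only
  rw [← h1, h2, add_zero]

/-- The du Bois-Reymond lemma for periodic functions: if `a' = -b` holds weakly against all
`C¹` periodic test functions, then it holds classically. -/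
lemma periodic_duBoisReymond {E : Type*} [NormedAddCommGroup E] [InnerProductSpace ℝ E]
    [CompleteSpace E] {a b : ℝ → E} (ha : Continuous a) (hb : Continuous b)
    (hap : Function.Periodic a 1) (hbp : Function.Periodic b 1)
    (H : ∀ v v' : ℝ → E, (∀ t, HasDerivAt v (v' t) t) → Continuous v' → Function.Periodic v 1 →
      ∫ t in (0:ℝ)..1, inner ℝ (a t) (v' t) = ∫ t in (0:ℝ)..1, inner ℝ (b t) (v t)) (t : ℝ) :
    HasDerivAt a (-b t) t := by
  have inner_int : ∀ (c : E) (φ : ℝ → E), Continuous φ →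
      ∫ t in (0:ℝ)..1, inner ℝ c (φ t) = inner ℝ c (∫ t in (0:ℝ)..1, φ t) := fun c φ hφ =>
    (innerSL ℝ c).intervalIntegral_comp_comm (hφ.intervalIntegrable 0 1)
  -- Constant test functions show that `b` has zero mean.
  have hb0 : ∫ t in (0:ℝ)..1, b t = 0 := by
    have h1 := H (fun _ => ∫ t in (0:ℝ)..1, b t) (fun _ => 0)
      (fun t => hasDerivAt_const t _) continuous_const (fun _ => rfl)
    simp only [inner_zero_right, intervalIntegral.integral_zero] at h1
    simp_rw [real_inner_comm (∫ t in (0:ℝ)..1, b t)] at h1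
    rw [inner_int _ _ hb] at h1
    exact inner_self_eq_zero.mp h1.symm
  set G : ℝ → E := fun t => ∫ s in (0:ℝ)..t, b s with hG
  have hGd : ∀ t, HasDerivAt G (b t) t := fun t => hb.integral_hasStrictDerivAt 0 t |>.hasDerivAt
  have hGp : Function.Periodic G 1 := periodic_primitive hb hbp hb0
  have hGc : Continuous G := continuous_iff_continuousAt.2 fun t => (hGd t).continuousAt
  set c : E := ∫ t in (0:ℝ)..1, (a t + G t) with hc
  set w : ℝ → E := fun t => a t + G t - c with hw
  have hwc : Continuous w := (ha.add hGc).sub continuous_const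
  have hwp : Function.Periodic w 1 := fun t => by simp only [hw]; rw [hap t, hGp t]
  have hw0 : ∫ t in (0:ℝ)..1, w t = 0 := by
    simp only [hw]
    rw [intervalIntegral.integral_sub ((ha.fun_add hGc).intervalIntegrable 0 1)
      (continuous_const.intervalIntegrable 0 1)]
    simp [← hc]
  -- The test function is the primitive `v` of `w = a + G - c`.
  set v : ℝ → E := fun t => ∫ s in (0:ℝ)..t, w s with hv
  have hvd : ∀ t, HasDerivAt v (w t) t := fun t => hwc.integral_hasStrictDerivAt 0 t |>.hasDerivAt
  have hvp : Function.Periodic v 1 := periodic_primitive hwc hwp hw0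
  have hvc : Continuous v := continuous_iff_continuousAt.2 fun t => (hvd t).continuousAt
  have hparts : ∫ t in (0:ℝ)..1, (inner ℝ (G t) (w t) + inner ℝ (b t) (v t)) = 0 := by
    rw [intervalIntegral.integral_eq_sub_of_hasDerivAt
      (f := fun t => inner ℝ (G t) (v t)) (fun t _ => (hGd t).inner ℝ (hvd t))
      (((hGc.inner hwc).add (hb.inner hvc)).intervalIntegrable 0 1)]
    have e1 := hGp 0
    have e2 := hvp 0
    rw [zero_add] at e1 e2
    rw [e1, e2, sub_self]
  have hI : ∀ φ : ℝ → ℝ, Continuous φ → IntervalIntegrable φ MeasureTheory.volume 0 1 :=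
    fun φ hφ => hφ.intervalIntegrable 0 1
  have hww : ∫ t in (0:ℝ)..1, inner ℝ (w t) (w t) = 0 := by
    have e : ∀ t, inner ℝ (w t) (w t)
        = inner ℝ (a t) (w t) + inner ℝ (G t) (w t) - inner ℝ c (w t) := fun t => by
      rw [← inner_add_left, ← inner_sub_left]
    simp_rw [e]
    rw [intervalIntegral.integral_sub (hI _ ((ha.inner hwc).fun_add (hGc.inner hwc)))
        (hI _ (continuous_const.inner hwc)),
      intervalIntegral.integral_add (hI _ (ha.inner hwc)) (hI _ (hGc.inner hwc)),
      inner_int _ _ hwc, hw0, inner_zero_right, sub_zero, H v w hvd hwc hvp]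
    rw [intervalIntegral.integral_add (hI _ (hGc.inner hwc)) (hI _ (hb.inner hvc))] at hparts
    linarith
  have hwz : ∀ t, w t = 0 := by
    intro t
    by_contra hne
    have hp : Function.Periodic (fun t => inner ℝ (w t) (w t)) 1 := fun s => by
      simp only [hwp s]
    have h2 := hp.intervalIntegral_add_eq t 0
    rw [zero_add, hww] at h2
    have := intervalIntegral.integral_pos (a := t) (b := t + 1)
      (f := fun t => inner ℝ (w t) (w t)) (by linarith)
      (hwc.inner hwc).continuousOn (fun x _ => real_inner_self_nonneg)
      ⟨t, ⟨le_refl t, by linarith⟩, real_inner_self_pos.2 hne⟩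
    linarith
  have ha' : a = fun t => c - G t := by
    funext t
    have := hwz t
    simp only [hw] at this
    rw [eq_sub_iff_add_eq]
    exact sub_eq_zero.1 this
  rw [ha']
  exact (hGd t).const_sub c

/-- First variation of `∫ Φ(x)` in the direction `v`, for `Φ` of class `C¹` on an open set
containing the curve `x`. -/
lemma hasDerivAt_integral_variation {F : Type*} [NormedAddCommGroup F] [NormedSpace ℝ F]
    {Φ : F → ℝ} {Ω : Set F} (hΩ : IsOpen Ω) (hΦ : ContDiffOn ℝ 1 Φ Ω)
    {x v : ℝ → F} (hx : Continuous x) (hv : Continuous v) (hxΩ : ∀ t, x t ∈ Ω) :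
    HasDerivAt (fun s : ℝ => ∫ t in (0:ℝ)..1, Φ (x t + s • v t))
      (∫ t in (0:ℝ)..1, fderiv ℝ Φ (x t) (v t)) 0 := by
  have hcurve : Continuous (fun p : ℝ × ℝ => x p.2 + p.1 • v p.2) := by fun_prop
  -- By compactness of `[0,1]`, the perturbed curves stay in `Ω` for all small `s`.
  obtain ⟨A, B, hA, -, h0A, hB, hAB⟩ := generalized_tube_lemma
    (isCompact_singleton (x := (0:ℝ))) (isCompact_Icc (a := (0:ℝ)) (b := 1))
    (hΩ.preimage hcurve) (by
      rintro ⟨s, t⟩ ⟨hs, -⟩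
      have hs0 : s = 0 := hs
      subst hs0
      simpa using hxΩ t)
  obtain ⟨ε, hε, hεA⟩ := Metric.nhds_basis_closedBall.mem_iff.1
    (hA.mem_nhds (h0A (Set.mem_singleton 0)))
  have hin : ∀ s ∈ Metric.closedBall (0:ℝ) ε, ∀ t ∈ Set.Icc (0:ℝ) 1, x t + s • v t ∈ Ω :=
    fun s hs t ht => hAB (Set.mk_mem_prod (hεA hs) (hB ht))
  have hΦ' : ContinuousOn (fderiv ℝ Φ) Ω := hΦ.continuousOn_fderiv_of_isOpen hΩ le_rfl
  have hcont : ContinuousOn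
      (fun p : ℝ × ℝ => fderiv ℝ Φ (x p.2 + p.1 • v p.2) (v p.2))
      (Metric.closedBall (0:ℝ) ε ×ˢ Set.Icc (0:ℝ) 1) := by
    refine ContinuousOn.clm_apply (hΦ'.comp hcurve.continuousOn ?_)
      (hv.comp continuous_snd).continuousOn
    rintro ⟨s, t⟩ ⟨hs, ht⟩
    exact hin s hs t ht
  obtain ⟨C, hC⟩ := ((isCompact_closedBall (0:ℝ) ε).prod
    (isCompact_Icc (a := (0:ℝ)) (b := 1))).exists_bound_of_continuousOn hcont
  have hsub : Set.uIoc (0:ℝ) 1 ⊆ Set.Icc 0 1 := by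
    rw [Set.uIoc_of_le zero_le_one]; exact Set.Ioc_subset_Icc_self
  have hFc : ∀ s ∈ Metric.closedBall (0:ℝ) ε,
      ContinuousOn (fun t => Φ (x t + s • v t)) (Set.Icc 0 1) := fun s hs =>
    hΦ.continuousOn.comp (by fun_prop) (fun t ht => hin s hs t ht)
  have h0 : (0:ℝ) ∈ Metric.closedBall (0:ℝ) ε := Metric.mem_closedBall_self hε.le
  have key := (intervalIntegral.hasDerivAt_integral_of_dominated_loc_of_deriv_le
    (μ := MeasureTheory.volume) (a := 0) (b := 1) (bound := fun _ => C)
    (F := fun (s : ℝ) t => Φ (x t + s • v t))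
    (F' := fun (s : ℝ) t => fderiv ℝ Φ (x t + s • v t) (v t)) (x₀ := (0:ℝ))
    (s := Metric.closedBall (0:ℝ) ε) (Metric.closedBall_mem_nhds 0 hε) ?_ ?_ ?_ ?_ ?_ ?_).2
  · simpa using key
  · filter_upwards [Metric.closedBall_mem_nhds (0:ℝ) hε] with s hs
    exact ((hFc s hs).mono hsub).aestronglyMeasurable measurableSet_uIoc
  · refine ContinuousOn.intervalIntegrable ?_
    rw [Set.uIcc_of_le zero_le_one]
    exact hFc 0 h0
  · refine ContinuousOn.aestronglyMeasurable (ContinuousOn.mono ?_ hsub) measurableSet_uIoc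
    exact hcont.comp (f := fun t : ℝ => ((0:ℝ), t)) (by fun_prop) (fun t ht => ⟨h0, ht⟩)
  · exact Filter.Eventually.of_forall fun t ht s hs => hC (s, t) ⟨hs, hsub ht⟩
  · exact intervalIntegrable_const
  · refine Filter.Eventually.of_forall fun t ht s hs => ?_
    have hd : HasFDerivAt Φ (fderiv ℝ Φ (x t + s • v t)) (x t + s • v t) :=
      ((hΦ.contDiffAt (hΩ.mem_nhds (hin s hs t (hsub ht)))).differentiableAt
        one_ne_zero).hasFDerivAt
    have hl : HasDerivAt (fun s : ℝ => x t + s • v t) (v t) s := by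
      simpa using ((hasDerivAt_id s).smul_const (v t)).const_add (x t)
    exact hd.comp_hasDerivAt s hl

section Potential

variable {n N : ℕ}

lemma isOpen_noncollision :
    IsOpen {X : Fin N → EuclideanSpace ℝ (Fin n) | ∀ i j, i ≠ j → X i ≠ X j} := by
  simp only [Set.ofPred_forall]
  refine isOpen_iInter_of_finite fun i => isOpen_iInter_of_finite fun j =>
    isOpen_iInter_of_finite fun _ => isOpen_ne_fun (continuous_apply i) (continuous_apply j)

lemma contDiffOn_potential
    {V : Fin N → Fin N → EuclideanSpace ℝ (Fin n) → ℝ}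
    (hV_C1 : ∀ i j, i ≠ j → ContDiffOn ℝ 1 (V i j) {ξ | ξ ≠ 0})
    {Vtot : (Fin N → EuclideanSpace ℝ (Fin n)) → ℝ}
    (hVtot : ∀ X, Vtot X =
      (1/2) * ∑ i, ∑ j ∈ univ.filter (fun j => j ≠ i), V i j (X i - X j)) :
    ContDiffOn ℝ 1 Vtot {X | ∀ i j, i ≠ j → X i ≠ X j} := by
  rw [funext hVtot]
  refine contDiffOn_const.mul (ContDiffOn.sum fun i _ => ContDiffOn.sum fun j hj => ?_)
  have hij : i ≠ j := (Finset.mem_filter.1 hj).2.symm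
  refine (hV_C1 i j hij).comp (t := {ξ | ξ ≠ 0})
    (f := fun X : Fin N → EuclideanSpace ℝ (Fin n) => X i - X j) ?_ ?_
  · exact ((contDiff_apply ℝ _ i).sub (contDiff_apply ℝ _ j)).contDiffOn
  · exact fun X hX => sub_ne_zero.2 (hX i j hij)

/-- The partial gradient in the `i`-th body represents the restriction of the total derivative
to the `i`-th factor. -/
lemma gradient_update_eq {Φ : (Fin N → EuclideanSpace ℝ (Fin n)) → ℝ}
    {X : Fin N → EuclideanSpace ℝ (Fin n)} (hΦ : DifferentiableAt ℝ Φ X) (i : Fin N) :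
    gradient (fun y => Φ (Function.update X i y)) (X i) =
      (InnerProductSpace.toDual ℝ (EuclideanSpace ℝ (Fin n))).symm
        ((fderiv ℝ Φ X).comp (ContinuousLinearMap.single ℝ (fun _ : Fin N => EuclideanSpace ℝ (Fin n)) i)) := by
  refine HasGradientAt.gradient (HasFDerivAt.hasGradientAt ?_)
  have h1 : HasFDerivAt Φ (fderiv ℝ Φ X) (Function.update X i (X i)) := by
    rw [Function.update_eq_self]; exact hΦ.hasFDerivAt
  have h2 := h1.comp (X i) (hasFDerivAt_update X (X i))
  have hL : ContinuousLinearMap.pi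
      (Pi.single i (ContinuousLinearMap.id ℝ (EuclideanSpace ℝ (Fin n)))) =
      ContinuousLinearMap.single ℝ (fun _ : Fin N => EuclideanSpace ℝ (Fin n)) i := by
    refine ContinuousLinearMap.ext fun w => funext fun j => ?_
    rcases eq_or_ne j i with rfl | hji <;> simp [*]
  rw [hL] at h2
  exact h2

lemma inner_gradient_update {Φ : (Fin N → EuclideanSpace ℝ (Fin n)) → ℝ}
    {X : Fin N → EuclideanSpace ℝ (Fin n)} (hΦ : DifferentiableAt ℝ Φ X) (i : Fin N)
    (w : EuclideanSpace ℝ (Fin n)) :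
    inner ℝ (gradient (fun y => Φ (Function.update X i y)) (X i)) w
      = fderiv ℝ Φ X (Pi.single i w) := by
  rw [gradient_update_eq hΦ, InnerProductSpace.toDual_symm_apply]
  simp

lemma fderiv_eq_sum_inner_gradient {Φ : (Fin N → EuclideanSpace ℝ (Fin n)) → ℝ}
    {X : Fin N → EuclideanSpace ℝ (Fin n)} (hΦ : DifferentiableAt ℝ Φ X)
    (w : Fin N → EuclideanSpace ℝ (Fin n)) :
    fderiv ℝ Φ X w
      = ∑ i, inner ℝ (gradient (fun y => Φ (Function.update X i y)) (X i)) (w i) := by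
  simp_rw [inner_gradient_update hΦ]
  rw [← map_sum, Finset.univ_sum_single]

lemma hasFDerivAt_kinetic (m : Fin N → ℝ) (p : Fin N → EuclideanSpace ℝ (Fin n)) :
    HasFDerivAt (fun p : Fin N → EuclideanSpace ℝ (Fin n) => ∑ i, m i * ‖p i‖ ^ 2)
      (∑ i, m i • (2 • (innerSL ℝ (p i)).comp
        (ContinuousLinearMap.proj (R := ℝ)
          (φ := fun _ : Fin N => EuclideanSpace ℝ (Fin n)) i))) p := by
  refine HasFDerivAt.fun_sum fun i _ => ?_
  exact (hasFDerivAt_apply i p).norm_sq.const_mul (m i)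

lemma contDiff_kinetic (m : Fin N → ℝ) :
    ContDiff ℝ 1 (fun p : Fin N → EuclideanSpace ℝ (Fin n) => ∑ i, m i * ‖p i‖ ^ 2) :=
  ContDiff.sum fun i _ => contDiff_const.mul ((contDiff_apply ℝ _ i).norm_sq ℝ)

end Potential

/-- **Lemma 2.1**. A critical point `ũ` of the fixed-energy functional `f` with
`f(ũ) > 0` gives, after the time rescaling `q(t) = ũ(t/T)`, a non-constant `T`-periodic
non-collision solution of the fixed-energy system (Ph). -/
theorem critical_point_gives_solution
    (n N : ℕ) (hN : 2 ≤ N)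
    (m : Fin N → ℝ) (hm : ∀ i, 0 < m i) (h : ℝ)
    (V : Fin N → Fin N → EuclideanSpace ℝ (Fin n) → ℝ)
    (hV_C1 : ∀ i j, i ≠ j → ContDiffOn ℝ 1 (V i j) {ξ | ξ ≠ 0})
    (Vtot : (Fin N → EuclideanSpace ℝ (Fin n)) → ℝ)
    (hVtot : ∀ X, Vtot X =
      (1/2) * ∑ i, ∑ j ∈ univ.filter (fun j => j ≠ i), V i j (X i - X j))
    (f : (ℝ → Fin N → EuclideanSpace ℝ (Fin n)) → ℝ)
    (hf : ∀ u : ℝ → Fin N → EuclideanSpace ℝ (Fin n), f u =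
      (1/2) * (∫ t in (0:ℝ)..1, ∑ i, m i * ‖deriv (fun s => u s i) t‖ ^ 2)
        * (∫ t in (0:ℝ)..1, (h - Vtot (u t))))
    (u : ℝ → Fin N → EuclideanSpace ℝ (Fin n))
    (hu_C2 : ContDiff ℝ 2 u)
    (hu_per : ∀ t : ℝ, u (t + 1) = u t)
    (hu_noncoll : ∀ t : ℝ, ∀ i j, i ≠ j → u t i ≠ u t j)
    -- `ũ` is a critical point of `f`
    (hu_crit : ∀ v : ℝ → Fin N → EuclideanSpace ℝ (Fin n),
      ContDiff ℝ 1 v → (∀ t : ℝ, v (t + 1) = v t) →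
      HasDerivAt (fun s : ℝ => f (fun t => u t + s • v t)) 0 0)
    (hf_pos : 0 < f u)
    (T : ℝ) (hT : 0 < T)
    (hT_def : 1 / T ^ 2 =
      (∫ t in (0:ℝ)..1, (h - Vtot (u t)))
        / ((1/2) * ∫ t in (0:ℝ)..1, ∑ i, m i * ‖deriv (fun s => u s i) t‖ ^ 2)) :
    (∃ t₁ t₂ : ℝ, u (t₁ / T) ≠ u (t₂ / T)) ∧
    (∀ t : ℝ, u ((t + T) / T) = u (t / T)) ∧
    (∀ t : ℝ, ∀ i j, i ≠ j → u (t / T) i ≠ u (t / T) j) ∧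
    (∀ t : ℝ, ∀ i,
      m i • deriv (deriv (fun s => u (s / T) i)) t
        + gradient (fun y => Vtot (Function.update (u (t / T)) i y)) (u (t / T) i)
        = 0) ∧
    (∀ t : ℝ,
      (1/2) * ∑ i, m i * ‖deriv (fun s => u (s / T) i) t‖ ^ 2
        + Vtot (u (t / T)) = h) := by
  set Ω : Set (Fin N → EuclideanSpace ℝ (Fin n)) := {X | ∀ i j, i ≠ j → X i ≠ X j} with hΩdef
  have hΩ : IsOpen Ω := isOpen_noncollision
  have hVΩ : ContDiffOn ℝ 1 Vtot Ω := contDiffOn_potential hV_C1 hVtot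
  have huΩ : ∀ t, u t ∈ Ω := hu_noncoll
  have hVd : ∀ t, DifferentiableAt ℝ Vtot (u t) := fun t =>
    (hVΩ.contDiffAt (hΩ.mem_nhds (huΩ t))).differentiableAt one_ne_zero
  have huc : Continuous u := hu_C2.continuous
  set p : ℝ → Fin N → EuclideanSpace ℝ (Fin n) := fun t i => deriv (fun s => u s i) t with hp
  have hui : ∀ i, ContDiff ℝ 2 (fun s => u s i) := contDiff_pi.1 hu_C2
  have hud : ∀ i t, HasDerivAt (fun s => u s i) (p t i) t := fun i t =>
    ((hui i).differentiable two_ne_zero t).hasDerivAt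
  have hpic : ∀ i, Continuous (fun t => p t i) := fun i => (hui i).continuous_deriv one_le_two
  have hpc : Continuous p := continuous_pi hpic
  have hpp : ∀ i, Function.Periodic (fun t => p t i) 1 := fun i t => by
    have h1 : (fun s => u (s + 1) i) = fun s => u s i := funext fun s => by rw [hu_per s]
    have h2 := deriv_comp_add_const (f := fun s => u s i) 1 t
    simp only [hp]
    rw [← h2, h1]
  set K : ℝ := ∫ t in (0:ℝ)..1, ∑ i, m i * ‖p t i‖ ^ 2 with hK
  set P : ℝ := ∫ t in (0:ℝ)..1, (h - Vtot (u t)) with hP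
  have hfu : f u = (1/2) * K * P := hf u
  have hK0 : 0 ≤ K := intervalIntegral.integral_nonneg zero_le_one fun t _ =>
    Finset.sum_nonneg fun i _ => mul_nonneg (hm i).le (sq_nonneg _)
  have hKpos : 0 < K := by
    rcases hK0.lt_or_eq with hlt | heq
    · exact hlt
    · rw [hfu, ← heq] at hf_pos; simp at hf_pos
  have hPK : P = K / (2 * T ^ 2) := by
    change 1 / T ^ 2 = P / (1 / 2 * K) at hT_def
    field_simp at hT_def ⊢
    linarith
  set g : Fin N → ℝ → EuclideanSpace ℝ (Fin n) := fun i t =>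
    gradient (fun y => Vtot (Function.update (u t) i y)) (u t i) with hg
  have hgc : ∀ i, Continuous (g i) := fun i => by
    have e : g i = fun t => (InnerProductSpace.toDual ℝ (EuclideanSpace ℝ (Fin n))).symm
        ((fderiv ℝ Vtot (u t)).comp
          (ContinuousLinearMap.single ℝ (fun _ : Fin N => EuclideanSpace ℝ (Fin n)) i)) :=
      funext fun t => gradient_update_eq (hVd t) i
    rw [e]
    have hfc : Continuous (fun t => fderiv ℝ Vtot (u t)) :=
      (hVΩ.continuousOn_fderiv_of_isOpen hΩ le_rfl).comp_continuous huc huΩ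
    exact (LinearIsometryEquiv.continuous _).comp (hfc.clm_comp continuous_const)
  have hgp : ∀ i, Function.Periodic (g i) 1 := fun i t => by simp only [hg, hu_per t]
  -- The Euler–Lagrange identity in weak form.
  have weak : ∀ v v' : ℝ → Fin N → EuclideanSpace ℝ (Fin n),
      (∀ t, HasDerivAt v (v' t) t) → Continuous v' → (∀ t, v (t + 1) = v t) →
      ∫ t in (0:ℝ)..1, ∑ i, (m i / T ^ 2) * inner ℝ (p t i) (v' t i)
        = ∫ t in (0:ℝ)..1, ∑ i, inner ℝ (g i t) (v t i) := by
    intro v v' hv hv'c hvp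
    have hvc : Continuous v := continuous_iff_continuousAt.2 fun t => (hv t).continuousAt
    have hv1 : ContDiff ℝ 1 v := contDiff_one_iff_deriv.2
      ⟨fun t => (hv t).differentiableAt, by
        rw [show deriv v = v' from funext fun t => (hv t).deriv]; exact hv'c⟩
    have hcrit := hu_crit v hv1 hvp
    have hkin := hasDerivAt_integral_variation (Ω := Set.univ) isOpen_univ
      (contDiff_kinetic m).contDiffOn hpc hv'c (fun _ => Set.mem_univ _)
    have hpot := hasDerivAt_integral_variation (Φ := fun X => h - Vtot X) hΩ
      (contDiffOn_const.sub hVΩ) huc hvc huΩ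
    have hprod := (hkin.const_mul (1/2)).mul hpot
    have hfun : (fun s : ℝ => f (fun t => u t + s • v t)) =
        (fun s : ℝ => (1/2) * ∫ t in (0:ℝ)..1, ∑ i, m i * ‖(p t + s • v' t) i‖ ^ 2) *
        (fun s : ℝ => ∫ t in (0:ℝ)..1, (h - Vtot (u t + s • v t))) := by
      funext s
      rw [hf]
      have hd : ∀ i t, deriv (fun τ => (u τ + s • v τ) i) t = (p t + s • v' t) i := fun i t =>
        ((hud i t).add ((hasDerivAt_pi.1 (hv t) i).const_smul s)).deriv
      simp only [hd, Pi.mul_apply]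
    rw [hfun] at hcrit
    have h0 := hcrit.unique hprod
    simp only [zero_smul, add_zero, (hasFDerivAt_kinetic m _).fderiv, fderiv_const_sub] at h0
    rw [← hK, ← hP] at h0
    have e1 : ∀ t, (∑ i, m i • (2 • (innerSL ℝ (p t i)).comp
        (ContinuousLinearMap.proj (R := ℝ)
          (φ := fun _ : Fin N => EuclideanSpace ℝ (Fin n)) i))) (v' t)
        = (2 * T ^ 2) * ∑ i, (m i / T ^ 2) * inner ℝ (p t i) (v' t i) := fun t => by
      rw [Finset.mul_sum, _root_.sum_apply]
      refine Finset.sum_congr rfl fun i _ => ?_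
      simp
      field_simp
    have e2 : ∀ t, (-fderiv ℝ Vtot (u t)) (v t) = - ∑ i, inner ℝ (g i t) (v t i) := fun t => by
      rw [_root_.neg_apply, fderiv_eq_sum_inner_gradient (hVd t)]
    simp only [e1, e2] at h0
    rw [intervalIntegral.integral_const_mul, intervalIntegral.integral_neg, hPK] at h0
    generalize (∫ t in (0:ℝ)..1, ∑ i, (m i / T ^ 2) * inner ℝ (p t i) (v' t i)) = A at h0 ⊢
    have h0' : K * (A - ∫ t in (0:ℝ)..1, ∑ i, inner ℝ (g i t) (v t i)) = 0 := by
      field_simp at h0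
      linarith
    exact sub_eq_zero.1 ((mul_eq_zero.1 h0').resolve_left hKpos.ne')
  -- Testing with variations of a single body gives the equations of motion for `ũ`.
  have hpd : ∀ i t, HasDerivAt (fun t => p t i) (-(T ^ 2 / m i) • g i t) t := by
    intro i t
    have hdb := periodic_duBoisReymond (a := fun t => (m i / T ^ 2) • p t i) (b := g i)
      ((hpic i).fun_const_smul _) (hgc i) (fun t => by simp only [hpp i t]) (hgp i) (by
        intro v v' hv hv'c hvp
        have hw := weak (fun t => Pi.single i (v t)) (fun t => Pi.single i (v' t))
          (fun t => by
            rw [hasDerivAt_pi]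
            intro j
            rcases eq_or_ne j i with rfl | hji
            · simpa using hv t
            · simpa [hji] using hasDerivAt_const t (0 : EuclideanSpace ℝ (Fin n)))
          ((continuous_single i).comp hv'c) (fun t => by rw [hvp t])
        have s1 : ∀ (c : Fin N → ℝ) (y : Fin N → EuclideanSpace ℝ (Fin n))
            (z : EuclideanSpace ℝ (Fin n)), ∑ j, c j * inner ℝ (y j)
              ((Pi.single i z : Fin N → EuclideanSpace ℝ (Fin n)) j)
              = c i * inner ℝ (y i) z := fun c y z => by
          rw [Finset.sum_eq_single i]
          · simp
          · intro j _ hji; simp [hji]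
          · simp
        have s2 := fun t => s1 1 (fun j => g j t) (v t)
        simp only [Pi.one_apply, one_mul] at s2
        simp only [s1, s2] at hw
        simpa only [real_inner_smul_left] using hw) t
    have hne := (hm i).ne'
    have h3 := hdb.fun_const_smul (T ^ 2 / m i)
    have hc1 : T ^ 2 / m i * (m i / T ^ 2) = 1 := by field_simp
    simp only [smul_smul, hc1, one_smul, smul_neg, ← neg_smul] at h3
    exact h3
  have hqd : ∀ i t, HasDerivAt (fun s => u (s / T) i) (T⁻¹ • p (t / T) i) t := fun i t => by
    have := HasDerivAt.scomp t (hud i (t / T)) ((hasDerivAt_id t).div_const T)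
    simpa [Function.comp_def, one_div] using this
  -- Conservation of energy along `ũ`; integrating over a period identifies the constant as `h`.
  set W : ℝ → ℝ := fun t => (1 / (2 * T ^ 2)) * ∑ i, m i * ‖p t i‖ ^ 2 + Vtot (u t) with hW
  have hWd : ∀ t, HasDerivAt W 0 t := by
    intro t
    have hpd' : HasDerivAt p (fun i => -(T ^ 2 / m i) • g i t) t :=
      hasDerivAt_pi.2 fun i => hpd i t
    have hud' : HasDerivAt u (p t) t := hasDerivAt_pi.2 fun i => hud i t
    have h1 := (hasFDerivAt_kinetic m (p t)).comp_hasDerivAt t hpd'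
    have h2 := (hVd t).hasFDerivAt.comp_hasDerivAt t hud'
    have h3 := (h1.const_mul (1 / (2 * T ^ 2))).add h2
    refine h3.congr_deriv ?_
    rw [fderiv_eq_sum_inner_gradient (hVd t), _root_.sum_apply, Finset.mul_sum,
      ← Finset.sum_add_distrib]
    refine Finset.sum_eq_zero fun i _ => ?_
    have hne := (hm i).ne'
    simp [real_inner_smul_right, real_inner_comm (p t i), hg]
    field_simp
    ring
  have hWconst : ∀ t, W t = W 0 := fun t =>
    is_const_of_deriv_eq_zero (fun t => (hWd t).differentiableAt) (fun t => (hWd t).deriv) t 0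
  have hVc : Continuous (fun t => Vtot (u t)) := hVΩ.continuousOn.comp_continuous huc huΩ
  have hkc : Continuous (fun t => ∑ i, m i * ‖p t i‖ ^ 2) := (contDiff_kinetic m).continuous.comp hpc
  have hWh : W 0 = h := by
    have h1 : ∫ t in (0:ℝ)..1, ((1 / (2 * T ^ 2)) * ∑ i, m i * ‖p t i‖ ^ 2 - (h - Vtot (u t)))
        = W 0 - h := by
      have e : ∀ t, (1 / (2 * T ^ 2)) * ∑ i, m i * ‖p t i‖ ^ 2 - (h - Vtot (u t)) = W 0 - h :=
        fun t => by rw [← hWconst t]; simp only [hW]; ring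
      simp only [e]
      simp
    rw [intervalIntegral.integral_sub ((continuous_const.fun_mul hkc).intervalIntegrable 0 1)
      ((continuous_const.fun_sub hVc).intervalIntegrable 0 1),
      intervalIntegral.integral_const_mul, ← hK, ← hP, hPK] at h1
    have : 1 / (2 * T ^ 2) * K - K / (2 * T ^ 2) = 0 := by ring
    linarith
  refine ⟨?_, ?_, fun t => hu_noncoll (t / T), ?_, ?_⟩
  · by_contra! hcon
    have hconst : ∀ t, u t = u 0 := fun t => by
      have := hcon (t * T) (0 * T)
      rwa [mul_div_cancel_right₀ _ hT.ne', mul_div_cancel_right₀ _ hT.ne'] at this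
    have hp0 : ∀ t i, p t i = 0 := fun t i => by
      simp only [hp]
      rw [show (fun s => u s i) = fun _ => u 0 i from funext fun s => by rw [hconst s]]
      exact deriv_const _ _
    simp [hK, hp0] at hKpos
  · intro t
    rw [add_div, div_self hT.ne', hu_per]
  · intro t i
    have hdq : deriv (fun s => u (s / T) i) = fun t => T⁻¹ • p (t / T) i :=
      funext fun t => (hqd i t).deriv
    have h2 : HasDerivAt (fun t => T⁻¹ • p (t / T) i)
        (T⁻¹ • T⁻¹ • (-(T ^ 2 / m i) • g i (t / T))) t := by
      have := (HasDerivAt.scomp t (hpd i (t / T)) ((hasDerivAt_id t).div_const T)).fun_const_smul T⁻¹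
      simpa [Function.comp_def, one_div] using this
    rw [hdq, h2.deriv]
    change _ + g i (t / T) = 0
    have hne := (hm i).ne'
    have hc1 : m i * (T⁻¹ * (T⁻¹ * -(T ^ 2 / m i))) = -1 := by field_simp
    rw [smul_smul, smul_smul, smul_smul, mul_assoc, mul_assoc, hc1]
    simp
  · intro t
    rw [← hWh, ← hWconst (t / T)]
    simp only [hW, (hqd _ t).deriv, norm_smul, mul_pow, norm_inv, Real.norm_eq_abs, inv_pow, sq_abs]
    rw [Finset.mul_sum, Finset.mul_sum]
    congr 1
    refine Finset.sum_congr rfl fun i _ => ?_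
    field_simp
end

section
/- (Palais' principle of symmetric criticality for finite groups.) Let H be a real Hilbert space, G a finite group, and ρ : G → (linear isometric automorphisms of H) a group homomorphism (an orthogonal representation). Let f : H → ℝ be continuously differentiable and G-invariant, i.e. f(ρ(σ)x) = f(x) for all σ ∈ G and x ∈ H. Let S = {x ∈ H : ρ(σ)x = x for all σ ∈ G} be the fixed-point subspace (a closed linear subspace of H). If x ∈ S is a critical point of the restriction of f to S — that is, the Fréchet derivative of f at x vanishes on every vector of S — then x is a critical point of f on all of H: the Fréchet derivative of f at x is the zero functional. -/
/-!
Differentiating `f ∘ ρ σ = f` at the fixed point `x` shows that `f'(x)` is a `G`-invariant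
functional. For any `v`, the orbit sum `∑ σ, ρ σ v` lies in the fixed-point subspace, so
`f'(x)` kills it; by invariance its value there is `|G| • f'(x) v`, and `|G| ≠ 0`.
-/

/-- **Palais' principle of symmetric criticality** (finite groups). If `f : H → ℝ` is a
`C¹` functional invariant under an orthogonal representation `ρ` of a finite group `G`
on a real Hilbert space `H`, and `x` lies in the fixed-point subspace `S` and is a
critical point of `f` restricted to `S`, then `x` is a critical point of `f` on `H`. -/
theorem palais_symmetric_criticality
    (H : Type*) [NormedAddCommGroup H] [InnerProductSpace ℝ H] [CompleteSpace H]
    (G : Type*) [Group G] [Finite G]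
    (ρ : G →* (H ≃ₗᵢ[ℝ] H))
    (f : H → ℝ) (hf : ContDiff ℝ 1 f)
    (hinv : ∀ (σ : G) (x : H), f (ρ σ x) = f x)
    (x : H) (hx : ∀ σ : G, ρ σ x = x)
    (hcrit : ∀ v : H, (∀ σ : G, ρ σ v = v) → fderiv ℝ f x v = 0) :
    fderiv ℝ f x = 0 := by
  have := Fintype.ofFinite G
  have hinv' : ∀ (σ : G) (v : H), fderiv ℝ f x (ρ σ v) = fderiv ℝ f x v := by
    intro σ v
    have hcomp : f ∘ ρ σ = f := funext (hinv σ)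
    have hchain := (ρ σ).toContinuousLinearEquiv.comp_right_fderiv (f := f) (x := x)
    have hv := DFunLike.congr_fun hchain v
    simp only [LinearIsometryEquiv.coe_toContinuousLinearEquiv, hcomp, hx] at hv
    exact hv.symm
  ext v
  have hfix : ∀ τ : G, ρ τ (∑ σ, ρ σ v) = ∑ σ, ρ σ v := by
    intro τ
    rw [map_sum]
    -- left translation by `τ` permutes the summands
    refine Fintype.sum_equiv (Equiv.mulLeft τ) _ _ fun σ => ?_
    simp [map_mul]
  have hsum := hcrit _ hfix
  simpa [map_sum, hinv'] using hsum
end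

section
/- (Sobolev inequality for mean-zero periodic functions.) Let T > 0 and let q : ℝ → ℝ^n be continuously differentiable with q(t + T) = q(t) for all t and ∫₀^T q(t) dt = 0. Then for every t ∈ [0, T], |q(t)| ≤ √(T/12) · (∫₀^T |q̇(s)|² ds)^{1/2}; in particular max_{0 ≤ t ≤ T} |q(t)|² ≤ (T/12) ∫₀^T |q̇(s)|² ds. -/
/-!
Fix `t` and put `v = q t`. Integrating by parts over the period `[t, t + T]` against the weight
`w s = s - t - T / 2`, which equals `-T / 2` and `T / 2` at the two endpoints, the mean-zero condition
removes the remaining integral and gives `∫ w ⟪v, q'⟫ = T ‖v‖ ^ 2`. Since `∫ w ^ 2 = T ^ 3 / 12`,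
expanding `0 ≤ ∫ ‖q' - (12 / T ^ 2) w v‖ ^ 2` yields `(12 / T) ‖v‖ ^ 2 ≤ ∫ ‖q'‖ ^ 2`; this is the
Cauchy-Schwarz inequality written as the positivity of a square at its optimal parameter.
-/

/-- The squared form of the inequality; it holds at every real `t`. -/
lemma sobolev_periodic_sq
    (n : ℕ) (T : ℝ) (hT : 0 < T)
    (q : ℝ → EuclideanSpace ℝ (Fin n))
    (hq_C1 : ContDiff ℝ 1 q)
    (hq_per : ∀ t : ℝ, q (t + T) = q t)
    (hq_mean : (∫ t in (0:ℝ)..T, q t) = 0) (t : ℝ) :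
    ‖q t‖ ^ 2 ≤ (T / 12) * ∫ s in (0:ℝ)..T, ‖deriv q s‖ ^ 2 := by
  have hc : Continuous q := hq_C1.continuous
  have hc' : Continuous (deriv q) := hq_C1.continuous_deriv le_rfl
  have hd : ∀ s, HasDerivAt q (deriv q s) s := fun s =>
    (hq_C1.differentiable one_ne_zero s).hasDerivAt
  have hper' : Function.Periodic (fun s => ‖deriv q s‖ ^ 2) T := by
    intro s
    have h : deriv (fun x => q (x + T)) s = deriv q (s + T) := deriv_comp_add_const q T s
    rw [funext hq_per] at h
    simp only [← h]
  have hI : ∫ s in t..t + T, ‖deriv q s‖ ^ 2 = ∫ s in (0:ℝ)..T, ‖deriv q s‖ ^ 2 := by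
    simpa using hper'.intervalIntegral_add_eq t 0
  have hM : ∫ s in t..t + T, q s = 0 := by
    have hp : Function.Periodic q T := hq_per
    have h := hp.intervalIntegral_add_eq t 0
    rw [zero_add] at h
    rw [h, hq_mean]
  have hMv : ∫ s in t..t + T, inner ℝ (q t) (q s) = 0 := by
    have h := (innerSL ℝ (q t)).intervalIntegral_comp_comm
      (μ := MeasureTheory.volume) (hc.intervalIntegrable t (t + T))
    simp only [innerSL_apply_apply, hM, inner_zero_right] at h
    exact h
  have hparts : ∫ s in t..t + T, (s - t - T / 2) * inner ℝ (q t) (deriv q s)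
      = T * ‖q t‖ ^ 2 := by
    have h := intervalIntegral.integral_mul_deriv_eq_deriv_mul
      (a := t) (b := t + T) (u := fun s => s - t - T / 2) (u' := fun _ => 1)
      (v := fun s => inner ℝ (q t) (q s)) (v' := fun s => inner ℝ (q t) (deriv q s))
      (fun s _ => ((hasDerivAt_id s).sub_const t).sub_const (T / 2))
      (fun s _ => by simpa using (hasDerivAt_const s (q t)).inner ℝ (hd s))
      (continuous_const.intervalIntegrable _ _)
      ((continuous_const.inner hc').intervalIntegrable _ _)
    rw [h]
    simp only [one_mul, hMv, hq_per, real_inner_self_eq_norm_sq]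
    ring
  have hw : ∫ s in t..t + T, (s - t - T / 2) ^ 2 = T ^ 3 / 12 := by
    have h := intervalIntegral.integral_comp_sub_right (a := t) (b := t + T)
      (fun x : ℝ => x ^ 2) (t + T / 2)
    simp only [integral_pow] at h
    simp only [sub_sub, h]
    push_cast
    ring
  have hexp : ∀ s, ‖deriv q s - ((12 / T ^ 2) * (s - t - T / 2)) • q t‖ ^ 2
      = ‖deriv q s‖ ^ 2 - (24 / T ^ 2) * ((s - t - T / 2) * inner ℝ (q t) (deriv q s))
        + (144 / T ^ 4 * ‖q t‖ ^ 2) * (s - t - T / 2) ^ 2 := by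
    intro s
    rw [norm_sub_sq_real, real_inner_smul_right, norm_smul, mul_pow, Real.norm_eq_abs, sq_abs,
      real_inner_comm]
    ring
  have hpos : 0 ≤ ∫ s in t..t + T, ‖deriv q s - ((12 / T ^ 2) * (s - t - T / 2)) • q t‖ ^ 2 :=
    intervalIntegral.integral_nonneg (by linarith) fun s _ => by positivity
  simp only [hexp] at hpos
  rw [intervalIntegral.integral_add (Continuous.intervalIntegrable (by fun_prop) _ _)
      (Continuous.intervalIntegrable (by fun_prop) _ _),
    intervalIntegral.integral_sub (Continuous.intervalIntegrable (by fun_prop) _ _)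
      (Continuous.intervalIntegrable (by fun_prop) _ _),
    intervalIntegral.integral_const_mul, intervalIntegral.integral_const_mul,
    hparts, hw, hI] at hpos
  have hmul := mul_nonneg (by positivity : 0 ≤ T / 12) hpos
  have hsimp : ∀ I : ℝ, T / 12 * (I - 24 / T ^ 2 * (T * ‖q t‖ ^ 2)
      + 144 / T ^ 4 * ‖q t‖ ^ 2 * (T ^ 3 / 12)) = T / 12 * I - ‖q t‖ ^ 2 := by
    intro I
    field_simp
    ring
  rw [hsimp] at hmul
  linarith

/-- **Sobolev inequality** for mean-zero `T`-periodic `C¹` curves: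
`max_{0 ≤ t ≤ T} |q(t)| ≤ √(T/12) (∫₀ᵀ |q̇|²)^{1/2}`. -/
theorem sobolev_inequality_periodic
    (n : ℕ) (T : ℝ) (hT : 0 < T)
    (q : ℝ → EuclideanSpace ℝ (Fin n))
    (hq_C1 : ContDiff ℝ 1 q)
    (hq_per : ∀ t : ℝ, q (t + T) = q t)
    (hq_mean : (∫ t in (0:ℝ)..T, q t) = 0) :
    (∀ t ∈ Set.Icc (0:ℝ) T,
      ‖q t‖ ≤ Real.sqrt (T / 12) * Real.sqrt (∫ s in (0:ℝ)..T, ‖deriv q s‖ ^ 2)) ∧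
    (∀ t ∈ Set.Icc (0:ℝ) T,
      ‖q t‖ ^ 2 ≤ (T / 12) * ∫ s in (0:ℝ)..T, ‖deriv q s‖ ^ 2) := by
  have key := sobolev_periodic_sq n T hT q hq_C1 hq_per hq_mean
  refine ⟨fun t _ => ?_, fun t _ => key t⟩
  rw [← Real.sqrt_mul (by positivity)]
  exact Real.le_sqrt_of_sq_le (key t)
end

section
/- (Coti Zelati's inequality.) Let N ≥ 2, α > 0, m_1,…,m_N > 0, and let x_1,…,x_N ∈ ℝ^n be pairwise distinct points (x_i ≠ x_j for i ≠ j). Then Σ_{1≤i<j≤N} m_i m_j / |x_i − x_j|^α ≥ C_α · (Σ_{i=1}^N m_i |x_i|²)^{−α/2}, where C_α = (Σ_{i=1}^N m_i)^{−α/2} · (Σ_{1≤i<j≤N} m_i m_j)^{(2+α)/2}. -/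
open Finset

/-!
Write `w = m_i m_j` and `d = |x_i - x_j|` for a pair `i < j`, and put `W = ∑ w`, `M = ∑ m_i`,
`I = ∑ m_i |x_i|²`. Lagrange's identity `∑ w d² = M I - |∑ m_i x_i|²` gives `∑ w d² ≤ M I`
(`sum_lt_mul_sq_le`). Since `d ^ (-α) = (d²) ^ (-α/2)` and `t ↦ t ^ (-α/2)` is convex, each
`d ^ (-α)` lies above the tangent line at `c = M I / W` (`tangent_le_rpow_neg`). Summing the
tangent bounds with weights `w`, the linear terms contribute a nonnegative amount because
`∑ w d² ≤ c W`, and what remains is `W c ^ (-α/2)`, the claimed lower bound.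
-/

/-- A symmetric double sum with zero diagonal is twice its strictly upper triangular part. -/
lemma two_mul_sum_lt {N : ℕ} (f : Fin N → Fin N → ℝ) (hs : ∀ i j, f i j = f j i)
    (h0 : ∀ i, f i i = 0) :
    2 * ∑ i, ∑ j ∈ univ.filter (fun j => i < j), f i j = ∑ i, ∑ j, f i j := by
  have h1 : ∑ i, ∑ j, (if i < j then f i j else 0) = ∑ i, ∑ j, (if j < i then f i j else 0) := by
    rw [Finset.sum_comm]
    refine Finset.sum_congr rfl fun i _ => Finset.sum_congr rfl fun j _ => ?_
    rw [hs]
  simp only [Finset.sum_filter]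
  rw [two_mul]
  nth_rewrite 2 [h1]
  simp only [← Finset.sum_add_distrib]
  refine Finset.sum_congr rfl fun i _ => Finset.sum_congr rfl fun j _ => ?_
  rcases lt_trichotomy i j with h | h | h
  · simp [h, h.not_gt]
  · subst h; simp [h0]
  · simp [h, h.not_gt]

/-- The inequality obtained from Lagrange's identity by dropping `-‖∑ m_i x_i‖²`. -/
lemma sum_lt_mul_sq_le {n N : ℕ} (m : Fin N → ℝ) (x : Fin N → EuclideanSpace ℝ (Fin n)) :
    ∑ i, ∑ j ∈ univ.filter (fun j => i < j), m i * m j * ‖x i - x j‖ ^ 2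
      ≤ (∑ i, m i) * ∑ i, m i * ‖x i‖ ^ 2 := by
  have h := two_mul_sum_lt (fun i j => m i * m j * ‖x i - x j‖ ^ 2)
    (fun i j => by rw [norm_sub_rev, mul_comm (m i)]) (fun i => by simp)
  have hsq : ∑ i, ∑ j, m i * m j * inner ℝ (x i) (x j) = ‖∑ i, m i • x i‖ ^ 2 := by
    rw [← real_inner_self_eq_norm_sq, sum_inner]
    refine Finset.sum_congr rfl fun i _ => ?_
    rw [inner_sum]
    refine Finset.sum_congr rfl fun j _ => ?_
    rw [real_inner_smul_left, real_inner_smul_right]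
    ring
  have h1 : ∑ i, ∑ j, m i * (m j * ‖x j‖ ^ 2) = (∑ i, m i) * ∑ i, m i * ‖x i‖ ^ 2 := by
    rw [Finset.sum_mul_sum]
  have h2 : ∑ i, ∑ j, (m i * ‖x i‖ ^ 2) * m j = (∑ i, m i * ‖x i‖ ^ 2) * ∑ i, m i := by
    rw [Finset.sum_mul_sum]
  have hexp : ∑ i, ∑ j, m i * m j * ‖x i - x j‖ ^ 2
      = ∑ i, ∑ j, (m i * ‖x i‖ ^ 2) * m j + ∑ i, ∑ j, m i * (m j * ‖x j‖ ^ 2)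
        - 2 * ∑ i, ∑ j, m i * m j * inner ℝ (x i) (x j) := by
    simp only [Finset.mul_sum, ← Finset.sum_add_distrib, ← Finset.sum_sub_distrib]
    refine Finset.sum_congr rfl fun i _ => Finset.sum_congr rfl fun j _ => ?_
    rw [norm_sub_sq_real]
    ring
  rw [hexp, hsq, h1, h2] at h
  nlinarith [sq_nonneg ‖∑ i, m i • x i‖]

/-- The graph of `y ↦ y ^ (-b)` lies above its tangent line at `y = 1`. -/
lemma tangent_le_rpow_neg {y b : ℝ} (hy : 0 < y) (hb : 0 ≤ b) : 1 - b * (y - 1) ≤ y ^ (-b) := by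
  rw [Real.rpow_def_of_pos hy]
  have h1 := Real.add_one_le_exp (Real.log y * -b)
  have h2 := mul_le_mul_of_nonneg_left (Real.log_le_sub_one_of_pos hy) hb
  linarith

/-- **Coti Zelati's inequality**: for pairwise distinct points `x₁, …, x_N` in `ℝⁿ`,
`∑_{i<j} m_i m_j / |x_i - x_j|^α ≥ C_α (∑ m_i |x_i|²)^{-α/2}` with
`C_α = (∑ m_i)^{-α/2} (∑_{i<j} m_i m_j)^{(2+α)/2}`. -/
theorem coti_zelati_inequality
    (n N : ℕ) (hN : 2 ≤ N) (α : ℝ) (hα : 0 < α)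
    (m : Fin N → ℝ) (hm : ∀ i, 0 < m i)
    (x : Fin N → EuclideanSpace ℝ (Fin n))
    (hx : ∀ i j, i ≠ j → x i ≠ x j) :
    ∑ i, ∑ j ∈ univ.filter (fun j => i < j), m i * m j / ‖x i - x j‖ ^ α
      ≥ ((∑ i, m i) ^ (-α / 2)
          * (∑ i, ∑ j ∈ univ.filter (fun j => i < j), m i * m j) ^ ((2 + α) / 2))
        * (∑ i, m i * ‖x i‖ ^ 2) ^ (-α / 2) := by
  set W := ∑ i, ∑ j ∈ univ.filter (fun j => i < j), m i * m j with hW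
  set M := ∑ i, m i with hM
  set I := ∑ i, m i * ‖x i‖ ^ 2 with hI
  have hle : ∑ i, ∑ j ∈ univ.filter (fun j => i < j), m i * m j * ‖x i - x j‖ ^ 2 ≤ M * I :=
    sum_lt_mul_sq_le m x
  have hpos : ∀ f : Fin N → Fin N → ℝ, (∀ i j, i < j → 0 < f i j) →
      0 < ∑ i, ∑ j ∈ univ.filter (fun j => i < j), f i j := by
    intro f hf
    have hnn : ∀ i, ∀ j ∈ univ.filter (fun j => i < j), 0 ≤ f i j :=
      fun i j hj => (hf i j (by simpa using hj)).le
    refine Finset.sum_pos' (fun i _ => Finset.sum_nonneg (hnn i))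
      ⟨⟨0, by omega⟩, mem_univ _, Finset.sum_pos' (hnn _) ⟨⟨1, by omega⟩, ?_, ?_⟩⟩
    · simp
    · exact hf _ _ (by simp)
  have hd : ∀ i j, i < j → 0 < ‖x i - x j‖ := fun i j hij =>
    norm_pos_iff.2 (sub_ne_zero.2 (hx i j hij.ne))
  have hw : ∀ i j, 0 < m i * m j := fun i j => mul_pos (hm i) (hm j)
  have hW0 : 0 < W := hpos _ fun i j _ => hw i j
  have hMI : 0 < M * I :=
    (hpos _ fun i j hij => mul_pos (hw i j) (pow_pos (hd i j hij) 2)).trans_le hle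
  have hM0 : 0 ≤ M := Finset.sum_nonneg fun i _ => (hm i).le
  have hI0 : 0 ≤ I := Finset.sum_nonneg fun i _ => mul_nonneg (hm i).le (sq_nonneg _)
  set c := M * I / W with hc
  have hc0 : 0 < c := div_pos hMI hW0
  have hterm : ∀ i j, i < j →
      c ^ (-α / 2) * ((1 + α / 2) * (m i * m j) - α / 2 / c * (m i * m j * ‖x i - x j‖ ^ 2))
        ≤ m i * m j / ‖x i - x j‖ ^ α := by
    intro i j hij
    have hd' := hd i j hij
    have ht := tangent_le_rpow_neg (y := ‖x i - x j‖ ^ 2 / c) (b := α / 2)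
      (by positivity) (by positivity)
    have he : (‖x i - x j‖ ^ α)⁻¹ = c ^ (-α / 2) * (‖x i - x j‖ ^ 2 / c) ^ (-(α / 2)) := by
      rw [← neg_div, ← Real.mul_rpow hc0.le (by positivity), mul_div_cancel₀ _ hc0.ne',
        ← Real.rpow_natCast, ← Real.rpow_mul hd'.le, ← Real.rpow_neg hd'.le]
      congr 1
      push_cast
      ring
    rw [div_eq_mul_inv (m i * m j), he]
    have hmul := mul_le_mul_of_nonneg_left ht
      (mul_nonneg (hw i j).le (Real.rpow_nonneg hc0.le (-α / 2)))
    calc _ = m i * m j * c ^ (-α / 2) * (1 - α / 2 * (‖x i - x j‖ ^ 2 / c - 1)) := by ring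
      _ ≤ _ := hmul
      _ = _ := by ring
  have hsum : ∑ i, ∑ j ∈ univ.filter (fun j => i < j),
      c ^ (-α / 2) * ((1 + α / 2) * (m i * m j) - α / 2 / c * (m i * m j * ‖x i - x j‖ ^ 2))
        ≤ ∑ i, ∑ j ∈ univ.filter (fun j => i < j), m i * m j / ‖x i - x j‖ ^ α :=
    Finset.sum_le_sum fun i _ => Finset.sum_le_sum fun j hj => hterm i j (by simpa using hj)
  simp only [← Finset.mul_sum, Finset.sum_sub_distrib] at hsum hW
  rw [← hW] at hsum
  refine le_trans ?_ hsum
  have hconst : M ^ (-α / 2) * W ^ ((2 + α) / 2) * I ^ (-α / 2) = c ^ (-α / 2) * W := by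
    rw [hc, Real.div_rpow hMI.le hW0.le, Real.mul_rpow hM0 hI0,
      show (2 + α) / 2 = 1 - (-α / 2) by ring, Real.rpow_sub hW0, Real.rpow_one]
    ring
  rw [hconst]
  refine mul_le_mul_of_nonneg_left ?_ (Real.rpow_nonneg hc0.le _)
  -- The linear terms are nonnegative in total, since `M * I = c * W`.
  have hlin := mul_le_mul_of_nonneg_left hle (show 0 ≤ α / 2 / c by positivity)
  have hcW : α / 2 / c * (M * I) = α / 2 * W := by
    rw [show M * I = c * W by rw [hc]; field_simp]
    field_simp
  linarith
end

section
/- Let N ≥ 2, m_1,…,m_N > 0, h > 0, and let V_{ij} : ℝ^n \ {0} → ℝ (1 ≤ i ≠ j ≤ N) be continuously differentiable with V_{ij}(ξ) ≤ 0 for all ξ ≠ 0, and suppose there exist α > 2, A > 0, r₁ > 0 such that V_{ij}(ξ) ≤ −A|ξ|^{−α} for all 0 < |ξ| ≤ r₁. Set V(u) = (1/2) Σ_{i≠j} V_{ij}(u_i − u_j) and f(u) = (1/2)(∫₀¹ Σ m_i |u̇_i|² dt)·(∫₀¹ (h − V(u)) dt). Let u_k : ℝ → (ℝ^n)^N, k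 ∈ ℕ, be continuously differentiable, 1-periodic, antiperiodic (u_k^i(t+1/2) = −u_k^i(t)) and non-collision (u_k^i(t) ≠ u_k^j(t) for all t, i ≠ j), and let u : ℝ → (ℝ^n)^N be continuous and 1-periodic. Suppose u_k → u uniformly on [0,1], there is M with ∫₀¹ Σ_i m_i |u̇_k^i(t)|² dt ≤ M for all k, and u has a collision: there exist t₀ and i₀ ≠ j₀ with u^{i₀}(t₀) = u^{j₀}(t₀). Then f(u_k) → +∞ as k → ∞. -/
/-!
Only the colliding pair matters. Put `q = u_k^{i₀} - u_k^{j₀}`, `δ = |q(t₀)|` and `E = ∫₀¹ |q̇|²`,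
so that `δ → 0` along the sequence while `δ > 0` by the absence of collisions.

Cauchy–Schwarz gives `|q(t) - q(s)|² ≤ (t - s) E` for `s ≤ t ≤ s + 1`. Together with antiperiodicity,
`2 q(t₀) = q(t₀) - q(t₀ + 1/2)`, it yields `8 δ² ≤ E`; hence `τ = δ² / E` is at most `1`. On
`[t₀, t₀ + τ]` the same inequality gives `|q| ≤ 2δ`, so by the strong-force condition the potential
part of the action is at least a constant times `τ (2δ)^{-α}`. Multiplying by `E` cancels the
denominator of `τ`:
`E · ∫ (h - V) ≥ c · 2^{-α} δ^{2 - α}` (`strong_force_bound`), and this tends to `+∞` because `α > 2`.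
The kinetic factor of `f` controls `E` up to a constant depending on the masses
(`norm_sub_sq_le_weighted_sum`). The argument is uniform in the kinetic energy, which may tend to `0`.
-/

open Finset

theorem norm_sub_sq_le_mul_integral {F : Type*} [NormedAddCommGroup F] [NormedSpace ℝ F]
    [CompleteSpace F] {q : ℝ → F} (hq : ContDiff ℝ 1 q) {s t : ℝ} (hst : s ≤ t) :
    ‖q t - q s‖ ^ 2 ≤ (t - s) * ∫ x in s..t, ‖deriv q x‖ ^ 2 := by
  have hc : Continuous (deriv q) := hq.continuous_deriv le_rfl
  have hFTC : ∫ x in s..t, deriv q x = q t - q s :=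
    intervalIntegral.integral_deriv_eq_sub
      (fun x _ => (hq.differentiable one_ne_zero) x) (hc.intervalIntegrable _ _)
  have hI : ‖q t - q s‖ ≤ ∫ x in s..t, ‖deriv q x‖ := by
    rw [← hFTC]
    exact intervalIntegral.norm_integral_le_integral_norm hst
  set I := ∫ x in s..t, ‖deriv q x‖ with hIdef
  set J := ∫ x in s..t, ‖deriv q x‖ ^ 2 with hJdef
  rcases hst.eq_or_lt with rfl | hlt
  · simp
  have hL : 0 < t - s := sub_pos.2 hlt
  -- Cauchy–Schwarz, from the nonnegativity of the variance of `‖deriv q‖` on `[s, t]`.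
  have hvar : 0 ≤ ∫ x in s..t, ((t - s) * ‖deriv q x‖ - I) ^ 2 :=
    intervalIntegral.integral_nonneg hst fun x _ => sq_nonneg _
  have hexp : ∫ x in s..t, ((t - s) * ‖deriv q x‖ - I) ^ 2
      = (t - s) ^ 2 * J - 2 * (t - s) * I * I + (t - s) * I ^ 2 := by
    have h1 : IntervalIntegrable (fun x => (t - s) ^ 2 * ‖deriv q x‖ ^ 2)
        MeasureTheory.volume s t := Continuous.intervalIntegrable (by fun_prop) _ _
    have h2 : IntervalIntegrable (fun x => 2 * (t - s) * I * ‖deriv q x‖)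
        MeasureTheory.volume s t := Continuous.intervalIntegrable (by fun_prop) _ _
    have h3 : IntervalIntegrable (fun _ : ℝ => I ^ 2)
        MeasureTheory.volume s t := Continuous.intervalIntegrable (by fun_prop) _ _
    calc ∫ x in s..t, ((t - s) * ‖deriv q x‖ - I) ^ 2
        = ∫ x in s..t, (((t - s) ^ 2 * ‖deriv q x‖ ^ 2 - 2 * (t - s) * I * ‖deriv q x‖)
            + I ^ 2) := by
          congr 1; ext x; ring
      _ = _ := by
          rw [intervalIntegral.integral_add (h1.sub h2) h3,
            intervalIntegral.integral_sub h1 h2, intervalIntegral.integral_const_mul,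
            intervalIntegral.integral_const_mul, intervalIntegral.integral_const, smul_eq_mul]
  have hCS : I ^ 2 ≤ (t - s) * J := by
    rw [hexp] at hvar
    have : 0 ≤ (t - s) * ((t - s) * J - I ^ 2) := by nlinarith
    linarith [nonneg_of_mul_nonneg_right this hL]
  have : ‖q t - q s‖ ^ 2 ≤ I ^ 2 := by gcongr
  exact this.trans hCS

/-- Quantitative form of the strong-force estimate for one relative position `q`: kinetic energy
times the integral of any periodic `g ≥ 0` that dominates `c |q|^{-α}` near `q = 0` is bounded below
by `c 2^{-α} |q(t₀)|^{2-α}`. -/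
theorem strong_force_bound {F : Type*} [NormedAddCommGroup F] [NormedSpace ℝ F]
    [CompleteSpace F] {q : ℝ → F} (hq : ContDiff ℝ 1 q)
    (hanti : ∀ t, q (t + 1 / 2) = -q t) (hne : ∀ t, q t ≠ 0)
    {g : ℝ → ℝ} (hg : Continuous g) (hgper : Function.Periodic g 1) (hg0 : ∀ t, 0 ≤ g t)
    {c α r : ℝ} (hc : 0 ≤ c) (hα : 0 ≤ α)
    (hgq : ∀ t, ‖q t‖ ≤ r → c * ‖q t‖ ^ (-α) ≤ g t)
    (t₀ : ℝ) (hr : 2 * ‖q t₀‖ ≤ r) :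
    c * 2 ^ (-α) * ‖q t₀‖ ^ (2 - α)
      ≤ (∫ t in (0:ℝ)..1, ‖deriv q t‖ ^ 2) * ∫ t in (0:ℝ)..1, g t := by
  have hcd : Continuous (deriv q) := hq.continuous_deriv le_rfl
  have hper : Function.Periodic q 1 := fun t => by
    have h1 := hanti (t + 1 / 2)
    rw [hanti t, neg_neg] at h1
    rw [← h1]; congr 1; ring
  have hdper : Function.Periodic (fun t => ‖deriv q t‖ ^ 2) 1 := fun t => by
    have h1 : deriv (fun s => q (s + 1)) t = deriv q (t + 1) := deriv_comp_add_const q 1 t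
    have h2 : (fun s => q (s + 1)) = q := funext hper
    rw [h2] at h1
    simp only [h1]
  have hE := hdper.intervalIntegral_add_eq 0 t₀
  have hP := hgper.intervalIntegral_add_eq 0 t₀
  rw [zero_add] at hE hP
  rw [hE, hP]
  set E := ∫ t in t₀..t₀ + 1, ‖deriv q t‖ ^ 2 with hEdef
  set δ := ‖q t₀‖ with hδ
  have hδ0 : 0 < δ := norm_pos_iff.2 (hne t₀)
  have hmod : ∀ t ∈ Set.Icc t₀ (t₀ + 1), ‖q t - q t₀‖ ^ 2 ≤ (t - t₀) * E := fun t ht => by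
    refine (norm_sub_sq_le_mul_integral hq ht.1).trans ?_
    refine mul_le_mul_of_nonneg_left ?_ (sub_nonneg.2 ht.1)
    exact intervalIntegral.integral_mono_interval le_rfl ht.1 ht.2
      (Filter.Eventually.of_forall fun x => sq_nonneg _)
      (Continuous.intervalIntegrable (by fun_prop) _ _)
  have hE8 : 8 * δ ^ 2 ≤ E := by
    have h1 := hmod (t₀ + 1 / 2) ⟨by linarith, by linarith⟩
    have h2 : ‖q (t₀ + 1 / 2) - q t₀‖ = 2 * δ := by
      rw [hanti, ← neg_add', norm_neg, ← two_smul ℝ (q t₀), norm_smul]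
      simp [hδ]
    rw [h2] at h1
    nlinarith
  have hEpos : 0 < E := lt_of_lt_of_le (by positivity) hE8
  set τ := δ ^ 2 / E with hτ
  have hτ0 : 0 ≤ τ := by positivity
  have hτE : τ * E = δ ^ 2 := div_mul_cancel₀ _ hEpos.ne'
  have hτ1 : τ ≤ 1 := by
    rw [hτ, div_le_one hEpos]; nlinarith [sq_nonneg δ]
  have hclose : ∀ t ∈ Set.Icc t₀ (t₀ + τ), ‖q t‖ ≤ 2 * δ := fun t ht => by
    have h1 := hmod t ⟨ht.1, ht.2.trans (by linarith)⟩
    have h2 : (t - t₀) * E ≤ τ * E := by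
      refine mul_le_mul_of_nonneg_right ?_ hEpos.le
      linarith [ht.2]
    have h3 : ‖q t - q t₀‖ ≤ δ :=
      le_of_sq_le_sq (h1.trans (h2.trans hτE.le)) hδ0.le
    calc ‖q t‖ = ‖(q t - q t₀) + q t₀‖ := by rw [sub_add_cancel]
      _ ≤ ‖q t - q t₀‖ + ‖q t₀‖ := norm_add_le _ _
      _ ≤ 2 * δ := by rw [← hδ]; linarith
  have hlow : τ * (c * (2 * δ) ^ (-α)) ≤ ∫ t in t₀..t₀ + 1, g t := by
    calc τ * (c * (2 * δ) ^ (-α)) = ∫ _ in t₀..t₀ + τ, c * (2 * δ) ^ (-α) := by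
          rw [intervalIntegral.integral_const, smul_eq_mul, add_sub_cancel_left]
      _ ≤ ∫ t in t₀..t₀ + τ, g t := by
        refine intervalIntegral.integral_mono_on (by linarith)
          (Continuous.intervalIntegrable (by fun_prop) _ _) (hg.intervalIntegrable _ _) ?_
        intro t ht
        refine le_trans ?_ (hgq t ((hclose t ht).trans hr))
        refine mul_le_mul_of_nonneg_left ?_ hc
        exact Real.rpow_le_rpow_of_nonpos (norm_pos_iff.2 (hne t)) (hclose t ht) (by linarith)
      _ ≤ _ := intervalIntegral.integral_mono_interval le_rfl (by linarith) (by linarith)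
          (Filter.Eventually.of_forall hg0) (hg.intervalIntegrable _ _)
  calc c * 2 ^ (-α) * δ ^ (2 - α) = (τ * E) * (c * (2 * δ) ^ (-α)) := by
        rw [hτE, Real.mul_rpow two_pos.le hδ0.le, sub_eq_add_neg, Real.rpow_add hδ0,
          Real.rpow_two]
        ring
    _ = E * (τ * (c * (2 * δ) ^ (-α))) := by ring
    _ ≤ _ := mul_le_mul_of_nonneg_left hlow hEpos.le

theorem norm_sub_sq_le_weighted_sum {ι F : Type*} [Fintype ι] [NormedAddCommGroup F]
    {m : ι → ℝ} (hm : ∀ i, 0 < m i) (v : ι → F) {i j : ι} (hij : i ≠ j) :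
    min (m i) (m j) / 2 * ‖v i - v j‖ ^ 2 ≤ ∑ l, m l * ‖v l‖ ^ 2 := by
  classical
  have h1 : m i * ‖v i‖ ^ 2 + m j * ‖v j‖ ^ 2 ≤ ∑ l, m l * ‖v l‖ ^ 2 := by
    rw [← Finset.sum_pair (f := fun l => m l * ‖v l‖ ^ 2) hij]
    exact Finset.sum_le_univ_sum_of_nonneg fun l => mul_nonneg (hm l).le (sq_nonneg _)
  have h2 : ‖v i - v j‖ ^ 2 ≤ 2 * (‖v i‖ ^ 2 + ‖v j‖ ^ 2) := by
    have h3 : ‖v i - v j‖ ^ 2 ≤ (‖v i‖ + ‖v j‖) ^ 2 := by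
      gcongr; exact norm_sub_le _ _
    nlinarith [sq_nonneg (‖v i‖ - ‖v j‖)]
  have hμ : 0 < min (m i) (m j) := lt_min (hm i) (hm j)
  have h4 : min (m i) (m j) * ‖v i‖ ^ 2 ≤ m i * ‖v i‖ ^ 2 := by
    gcongr; exact min_le_left _ _
  have h5 : min (m i) (m j) * ‖v j‖ ^ 2 ≤ m j * ‖v j‖ ^ 2 := by
    gcongr; exact min_le_right _ _
  nlinarith

/-- **Lemma 3.1**: along a bounded-energy sequence of antiperiodic non-collision loops
converging uniformly to a loop with a collision, the fixed-energy functional `f`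
blows up to `+∞`. -/
theorem action_blows_up_at_collision
    (n N : ℕ) (hN : 2 ≤ N)
    (m : Fin N → ℝ) (hm : ∀ i, 0 < m i)
    (h : ℝ) (hh : 0 < h)
    (V : Fin N → Fin N → EuclideanSpace ℝ (Fin n) → ℝ)
    (hV_C1 : ∀ i j, i ≠ j → ContDiffOn ℝ 1 (V i j) {ξ | ξ ≠ 0})
    (hV_nonpos : ∀ i j, i ≠ j → ∀ ξ : EuclideanSpace ℝ (Fin n), ξ ≠ 0 → V i j ξ ≤ 0)
    (α : ℝ) (hα : 2 < α) (A : ℝ) (hA : 0 < A) (r₁ : ℝ) (hr₁ : 0 < r₁)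
    (hV_sf : ∀ i j, i ≠ j → ∀ ξ : EuclideanSpace ℝ (Fin n), 0 < ‖ξ‖ → ‖ξ‖ ≤ r₁ →
      V i j ξ ≤ -A * ‖ξ‖ ^ (-α))
    (Vtot : (Fin N → EuclideanSpace ℝ (Fin n)) → ℝ)
    (hVtot : ∀ X, Vtot X =
      (1/2) * ∑ i, ∑ j ∈ univ.filter (fun j => j ≠ i), V i j (X i - X j))
    (f : (ℝ → Fin N → EuclideanSpace ℝ (Fin n)) → ℝ)
    (hf : ∀ w : ℝ → Fin N → EuclideanSpace ℝ (Fin n), f w =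
      (1/2) * (∫ t in (0:ℝ)..1, ∑ i, m i * ‖deriv (fun s => w s i) t‖ ^ 2)
        * (∫ t in (0:ℝ)..1, (h - Vtot (w t))))
    (u' : ℕ → ℝ → Fin N → EuclideanSpace ℝ (Fin n))
    (hu'_C1 : ∀ k, ContDiff ℝ 1 (u' k))
    (hu'_per : ∀ k, ∀ t : ℝ, u' k (t + 1) = u' k t)
    (hu'_anti : ∀ k, ∀ t : ℝ, ∀ i, u' k (t + 1/2) i = -u' k t i)
    (hu'_noncoll : ∀ k, ∀ t : ℝ, ∀ i j, i ≠ j → u' k t i ≠ u' k t j)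
    (u : ℝ → Fin N → EuclideanSpace ℝ (Fin n))
    (hu_cont : Continuous u)
    (hu_per : ∀ t : ℝ, u (t + 1) = u t)
    (hconv : TendstoUniformlyOn u' u Filter.atTop (Set.Icc 0 1))
    (M : ℝ)
    (hM : ∀ k, (∫ t in (0:ℝ)..1, ∑ i, m i * ‖deriv (fun s => u' k s i) t‖ ^ 2) ≤ M)
    (t₀ : ℝ) (i₀ j₀ : Fin N) (hij : i₀ ≠ j₀) (hcoll : u t₀ i₀ = u t₀ j₀) :
    Filter.Tendsto (fun k => f (u' k)) Filter.atTop Filter.atTop := by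
  -- Translate the collision time into `[0, 1]`, where convergence is assumed.
  obtain ⟨s, hs, hus⟩ := Function.Periodic.exists_mem_Ico₀ (f := u) hu_per one_pos t₀
  rw [hus] at hcoll
  set δ : ℕ → ℝ := fun k => ‖u' k s i₀ - u' k s j₀‖ with hδ
  have hδpos : ∀ k, 0 < δ k := fun k =>
    norm_pos_iff.2 (sub_ne_zero.2 (hu'_noncoll k s i₀ j₀ hij))
  have hδlim : Filter.Tendsto δ Filter.atTop (nhds 0) := by
    have h1 := hconv.tendsto_at ⟨hs.1, hs.2.le⟩
    have h2 := ((tendsto_pi_nhds.1 h1 i₀).sub (tendsto_pi_nhds.1 h1 j₀)).norm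
    rwa [hcoll, sub_self, norm_zero] at h2
  set μ := min (m i₀) (m j₀) with hμ
  have hμ0 : 0 < μ := lt_min (hm i₀) (hm j₀)
  set C := 1 / 2 * (μ / 2) * (A / 2 * 2 ^ (-α)) with hC
  have hC0 : 0 < C := by positivity
  have hblow : Filter.Tendsto (fun k => C * δ k ^ (2 - α)) Filter.atTop Filter.atTop := by
    refine Filter.Tendsto.const_mul_atTop hC0 ?_
    exact (tendsto_rpow_neg_nhdsGT_zero (by linarith : 2 - α < 0)).comp
      (tendsto_nhdsWithin_iff.2 ⟨hδlim, Filter.Eventually.of_forall hδpos⟩)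
  refine Filter.tendsto_atTop_mono' _ ?_ hblow
  filter_upwards [hδlim.eventually (gt_mem_nhds (half_pos hr₁))] with k hk
  have hw : ∀ i, ContDiff ℝ 1 (fun t => u' k t i) := contDiff_pi.1 (hu'_C1 k)
  have hdw : ∀ i, Continuous (deriv fun t => u' k t i) := fun i =>
    (hw i).continuous_deriv le_rfl
  have hVcont : Continuous fun t => Vtot (u' k t) := by
    simp only [hVtot]
    refine continuous_const.mul (continuous_finsetSum _ fun i _ =>
      continuous_finsetSum _ fun j hj => ?_)
    have hji : i ≠ j := (Finset.mem_filter.1 hj).2.symm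
    exact (hV_C1 i j hji).continuousOn.comp_continuous
      ((hw i).continuous.sub (hw j).continuous)
      fun t => sub_ne_zero.2 (hu'_noncoll k t i j hji)
  have hVle : ∀ t, Vtot (u' k t) ≤ 1 / 2 * V i₀ j₀ (u' k t i₀ - u' k t j₀) := fun t => by
    rw [hVtot]
    have hterm : ∀ i, ∀ j ∈ univ.filter (fun j => j ≠ i),
        V i j (u' k t i - u' k t j) ≤ 0 := fun i j hj =>
      hV_nonpos i j (Finset.mem_filter.1 hj).2.symm _
        (sub_ne_zero.2 (hu'_noncoll k t i j (Finset.mem_filter.1 hj).2.symm))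
    have h1 : ∑ i, ∑ j ∈ univ.filter (fun j => j ≠ i), V i j (u' k t i - u' k t j)
        ≤ ∑ j ∈ univ.filter (fun j => j ≠ i₀), V i₀ j (u' k t i₀ - u' k t j) := by
      rw [← Finset.add_sum_erase _ _ (Finset.mem_univ i₀)]
      have := Finset.sum_nonpos (s := univ.erase i₀)
        fun i _ => Finset.sum_nonpos (hterm i)
      linarith
    have hj₀ : j₀ ∈ univ.filter (fun j => j ≠ i₀) := by simp [hij.symm]
    have h2 : ∑ j ∈ univ.filter (fun j => j ≠ i₀), V i₀ j (u' k t i₀ - u' k t j)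
        ≤ V i₀ j₀ (u' k t i₀ - u' k t j₀) := by
      rw [← Finset.add_sum_erase _ _ hj₀]
      have := Finset.sum_nonpos (s := (univ.filter (fun j => j ≠ i₀)).erase j₀)
        fun j hj => hterm i₀ j (Finset.mem_of_mem_erase hj)
      linarith
    linarith
  have hqne : ∀ t, u' k t i₀ - u' k t j₀ ≠ 0 := fun t =>
    sub_ne_zero.2 (hu'_noncoll k t i₀ j₀ hij)
  have hg0 : ∀ t, 0 ≤ h - Vtot (u' k t) := fun t => by
    linarith [hVle t, hV_nonpos i₀ j₀ hij _ (hqne t)]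
  have hbound := strong_force_bound (q := fun t => u' k t i₀ - u' k t j₀)
    ((hw i₀).sub (hw j₀))
    (fun t => by rw [hu'_anti, hu'_anti]; abel) hqne
    (g := fun t => h - Vtot (u' k t)) (continuous_const.sub hVcont)
    (fun t => by simp only [hu'_per]) hg0 (c := A / 2) (α := α) (r := r₁)
    (by positivity) (by linarith)
    (fun t ht => by
      linarith [hVle t, hV_sf i₀ j₀ hij _ (norm_pos_iff.2 (hqne t)) ht])
    s (by change 2 * δ k ≤ r₁; linarith)
  have hP0 : 0 ≤ ∫ t in (0:ℝ)..1, (h - Vtot (u' k t)) :=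
    intervalIntegral.integral_nonneg zero_le_one fun t _ => hg0 t
  have hK : μ / 2 * ∫ t in (0:ℝ)..1, ‖deriv (fun t => u' k t i₀ - u' k t j₀) t‖ ^ 2
      ≤ ∫ t in (0:ℝ)..1, ∑ i, m i * ‖deriv (fun s => u' k s i) t‖ ^ 2 := by
    have hder : ∀ t, deriv (fun t => u' k t i₀ - u' k t j₀) t
        = deriv (fun t => u' k t i₀) t - deriv (fun t => u' k t j₀) t := fun t =>
      deriv_fun_sub ((hw i₀).differentiable one_ne_zero t)
        ((hw j₀).differentiable one_ne_zero t)
    simp only [hder]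
    rw [← intervalIntegral.integral_const_mul]
    refine intervalIntegral.integral_mono_on zero_le_one
      (Continuous.intervalIntegrable ?_ _ _) (Continuous.intervalIntegrable ?_ _ _) ?_
    · exact continuous_const.mul (((hdw i₀).sub (hdw j₀)).norm.pow 2)
    · exact continuous_finsetSum _ fun i _ => continuous_const.mul ((hdw i).norm.pow 2)
    · intro t _
      exact norm_sub_sq_le_weighted_sum hm (fun i => deriv (fun s => u' k s i) t) hij
  rw [hf]
  set P := ∫ t in (0:ℝ)..1, (h - Vtot (u' k t))
  set E := ∫ t in (0:ℝ)..1, ‖deriv (fun t => u' k t i₀ - u' k t j₀) t‖ ^ 2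
  set K := ∫ t in (0:ℝ)..1, ∑ i, m i * ‖deriv (fun s => u' k s i) t‖ ^ 2
  have hμ4 : 0 ≤ 1 / 2 * (μ / 2) := by positivity
  calc C * δ k ^ (2 - α) = 1 / 2 * (μ / 2) * (A / 2 * 2 ^ (-α) * δ k ^ (2 - α)) := by
        rw [hC]; ring
    _ ≤ 1 / 2 * (μ / 2) * (E * P) := mul_le_mul_of_nonneg_left hbound hμ4
    _ = 1 / 2 * ((μ / 2 * E) * P) := by ring
    _ ≤ 1 / 2 * (K * P) :=
        mul_le_mul_of_nonneg_left (mul_le_mul_of_nonneg_right hK hP0) (by norm_num)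
    _ = 1 / 2 * K * P := by ring
end

section
/- Let N ≥ 2, m_1,…,m_N > 0, h > 0, and let V_{ij} : ℝ^n \ {0} → ℝ (1 ≤ i ≠ j ≤ N) be continuously differentiable with V_{ij}(ξ) ≤ 0 for all ξ ≠ 0, and suppose there exist α > 2, A > 0, r₁ > 0 such that V_{ij}(ξ) ≤ −A|ξ|^{−α} for all 0 < |ξ| ≤ r₁. Set V(u) = (1/2) Σ_{i≠j} V_{ij}(u_i − u_j) and f(u) = (1/2)(∫₀¹ Σ m_i |u̇_i|² dt)·(∫₀¹ (h − V(u)) dt). Then for every λ ∈ ℝ there exists a constant k = k(λ) > 0 such that for every continuously differentiable, 1-periodic, antiperiodic (u_i(t+1/2) = −u_i(t)), non-collision map u : ℝ → (ℝ^n)^N with f(u) ≤ λ, one has ‖u‖ ≤ k · p(u), where ‖u‖ = (∫₀¹ Σ_{i=1}^N m_i |u̇_i(t)|² dt)^{1/2} and p(u) = min_{1 ≤ i ≠ j ≤ N, t ∈ [0,1]} |u_i(t) − u_j(t)|. -/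
open Finset

/-!
Let `E = ∫₀¹ Σ mᵢ |u̇ᵢ|²` and let the minimal distance `p > 0` be attained by the pair `(i, j)` at
time `t₀`. Since `h - V ≥ h`, the bound `f(u) ≤ λ` gives `E ≤ 2λ/h`, so it is enough to bound `p`
from below, unless `E` is already at most a multiple of `p²`.

With `C` such that `|u̇ᵢ - u̇ⱼ|² ≤ C Σ mₖ |u̇ₖ|²`, suppose `C E > p²`. The difference `uᵢ - uⱼ` moves
by at most `p` during the time `δ = p² / (C E) < 1` after `t₀` (`norm_sub_le_of_energy`), so
`|uᵢ - uⱼ| ≤ 2p` on `[t₀, t₀ + δ]`. If `2p ≤ r₁`, the strong force condition yields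
`∫ (h - V) ≥ δ (A/2) (2p)^(-α)`. Multiplying by `E / 2`, the energy cancels out of `δ E = p² / C`,
and `(2p)^(2-α) ≤ 16 C λ / A` remains (`rpow_bound_of_action_le`). As `α > 2`, this excludes small
values of `p`. Periodicity allows the integrals over `[0, 1]` to be shifted to `[t₀, t₀ + 1]`.
-/

/-- A curve whose speed squared is at most `C g` moves by at most `p` during a time
`p² / (C E)`, where `E` is the integral of `g` over a unit interval. -/
lemma norm_sub_le_of_energy {F : Type*} [NormedAddCommGroup F] [NormedSpace ℝ F]
    [CompleteSpace F] (w : ℝ → F) (hw : ContDiff ℝ 1 w) (g : ℝ → ℝ) (hg : Continuous g)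
    (hg0 : ∀ t, 0 ≤ g t) (C E p s t : ℝ) (hC : 0 < C) (hE : 0 < E) (hp : 0 < p)
    (hwg : ∀ t, ‖deriv w t‖ ^ 2 ≤ C * g t) (hint : ∫ x in s..(s + 1), g x = E)
    (hst : s ≤ t) (hts1 : t ≤ s + 1) (hts : t - s ≤ p ^ 2 / (C * E)) :
    ‖w t - w s‖ ≤ p := by
  have hdc : Continuous (deriv w) := hw.continuous_deriv le_rfl
  have hCE : 0 < C * E := mul_pos hC hE
  have h1 : ∫ x in s..t, deriv w x = w t - w s :=
    intervalIntegral.integral_deriv_eq_sub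
      (fun x _ => (hw.differentiable one_ne_zero).differentiableAt)
      (hdc.intervalIntegrable _ _)
  have h2 : ∫ x in s..t, g x ≤ E := by
    rw [← hint]
    exact intervalIntegral.integral_mono_interval le_rfl hst hts1
      (Filter.Eventually.of_forall hg0) (hg.intervalIntegrable _ _)
  -- Young's inequality with weight `ε = p / (C E)` replaces Cauchy–Schwarz.
  have h3 : ∀ x, ‖deriv w x‖ ≤ p / (2 * E) * g x + C * E / (2 * p) := by
    intro x
    have hx := hwg x
    have e : p / (2 * E) * g x + C * E / (2 * p)
        = p / (2 * (C * E)) * (C * g x) + C * E / (2 * p) := by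
      field_simp
    have hle : p / (2 * (C * E)) * ‖deriv w x‖ ^ 2 ≤ p / (2 * (C * E)) * (C * g x) := by
      gcongr
    have hy : ‖deriv w x‖ ≤ p / (2 * (C * E)) * ‖deriv w x‖ ^ 2 + C * E / (2 * p) := by
      have : p / (2 * (C * E)) * ‖deriv w x‖ ^ 2 + C * E / (2 * p) - ‖deriv w x‖
          = (p * ‖deriv w x‖ - C * E) ^ 2 / (2 * p * (C * E)) := by
        field_simp
        ring
      have h0 : 0 ≤ (p * ‖deriv w x‖ - C * E) ^ 2 / (2 * p * (C * E)) := by positivity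
      linarith
    linarith
  calc ‖w t - w s‖ = ‖∫ x in s..t, deriv w x‖ := by rw [h1]
    _ ≤ ∫ x in s..t, ‖deriv w x‖ := intervalIntegral.norm_integral_le_integral_norm hst
    _ ≤ ∫ x in s..t, (p / (2 * E) * g x + C * E / (2 * p)) :=
        intervalIntegral.integral_mono_on hst (hdc.norm.intervalIntegrable _ _)
          ((by fun_prop : Continuous fun x => p / (2 * E) * g x + C * E / (2 * p)).intervalIntegrable
            _ _) (fun x _ => h3 x)
    _ = p / (2 * E) * (∫ x in s..t, g x) + (t - s) * (C * E / (2 * p)) := by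
        rw [intervalIntegral.integral_add ((hg.const_mul _).intervalIntegrable _ _)
          (continuous_const.intervalIntegrable _ _), intervalIntegral.integral_const_mul,
          intervalIntegral.integral_const, smul_eq_mul]
    _ ≤ p / (2 * E) * E + p ^ 2 / (C * E) * (C * E / (2 * p)) := by gcongr
    _ = p := by field_simp; norm_num

/-- If the potential term `G` is at least `(A/2) ‖w‖^(-α)` whenever `‖w‖ ≤ r₁`, an action bound
`λ` forces `(2p)^(2-α) ≤ 16 C λ / A`, for `p = ‖w t₀‖` with `2p ≤ r₁` and
`p² < C E`. -/
lemma rpow_bound_of_action_le {F : Type*} [NormedAddCommGroup F] [NormedSpace ℝ F]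
    [CompleteSpace F] (w : ℝ → F) (hw : ContDiff ℝ 1 w) (hw0 : ∀ t, w t ≠ 0)
    (g G : ℝ → ℝ) (hg : Continuous g) (hg0 : ∀ t, 0 ≤ g t) (hG : Continuous G)
    (hG0 : ∀ t, 0 ≤ G t) (A α r₁ C E lam t₀ : ℝ) (hα : 2 < α) (hA : 0 < A) (hC : 0 < C)
    (hE : 0 < E) (hwg : ∀ t, ‖deriv w t‖ ^ 2 ≤ C * g t)
    (hGw : ∀ t, ‖w t‖ ≤ r₁ → A / 2 * ‖w t‖ ^ (-α) ≤ G t)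
    (hint : ∫ x in t₀..(t₀ + 1), g x = E)
    (hact : 1 / 2 * E * (∫ x in t₀..(t₀ + 1), G x) ≤ lam)
    (hpr : 2 * ‖w t₀‖ ≤ r₁) (hpE : ‖w t₀‖ ^ 2 < C * E) :
    (2 * ‖w t₀‖) ^ (2 - α) ≤ 16 * C * lam / A := by
  set p := ‖w t₀‖ with hp_def
  have hp : 0 < p := norm_pos_iff.mpr (hw0 t₀)
  have hCE : 0 < C * E := mul_pos hC hE
  set δ := p ^ 2 / (C * E) with hδ
  have hδ0 : 0 < δ := by positivity
  have hδ1 : δ ≤ 1 := by rw [hδ, div_le_one hCE]; exact hpE.le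
  have hlow : ∀ t ∈ Set.Icc t₀ (t₀ + δ), A / 2 * (2 * p) ^ (-α) ≤ G t := by
    intro t ht
    have hd := norm_sub_le_of_energy w hw g hg hg0 C E p t₀ t hC hE hp hwg hint ht.1
      (by linarith [ht.2]) (by linarith [ht.2])
    have hwt : ‖w t‖ ≤ 2 * p := by
      have := norm_add_le (w t - w t₀) (w t₀)
      rw [sub_add_cancel] at this
      linarith
    refine le_trans ?_ (hGw t (hwt.trans hpr))
    have := Real.rpow_le_rpow_of_nonpos (norm_pos_iff.mpr (hw0 t)) hwt
      (by linarith : -α ≤ 0)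
    gcongr
  have hI : δ * (A / 2 * (2 * p) ^ (-α)) ≤ ∫ x in t₀..(t₀ + 1), G x := by
    calc δ * (A / 2 * (2 * p) ^ (-α))
        = ∫ x in t₀..(t₀ + δ), A / 2 * (2 * p) ^ (-α) := by
          rw [intervalIntegral.integral_const, smul_eq_mul, add_sub_cancel_left]
      _ ≤ ∫ x in t₀..(t₀ + δ), G x :=
          intervalIntegral.integral_mono_on (by linarith)
            (continuous_const.intervalIntegrable _ _) (hG.intervalIntegrable _ _) hlow
      _ ≤ _ := intervalIntegral.integral_mono_interval le_rfl (by linarith) (by linarith)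
          (Filter.Eventually.of_forall hG0) (hG.intervalIntegrable _ _)
  have h1 : 1 / 2 * E * (δ * (A / 2 * (2 * p) ^ (-α))) ≤ lam := by
    refine le_trans ?_ hact
    gcongr
  have h2 : (2 * p) ^ (2 - α) = (2 * p) ^ 2 * (2 * p) ^ (-α) := by
    rw [sub_eq_add_neg, Real.rpow_add (by positivity)]
    norm_num
  rw [le_div_iff₀ hA, h2]
  have h3 : 16 * C * (1 / 2 * E * (δ * (A / 2 * (2 * p) ^ (-α))))
      = (2 * p) ^ 2 * (2 * p) ^ (-α) * A := by
    rw [hδ]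
    field_simp
    ring
  rw [← h3]
  gcongr

lemma exists_forall_lt_rpow (β M r : ℝ) (hβ : β < 0) (hr : 0 < r) :
    ∃ q₀ > 0, q₀ ≤ r ∧ ∀ q, 0 < q → q < q₀ → M < q ^ β := by
  have h := (tendsto_rpow_neg_nhdsGT_zero hβ).eventually_gt_atTop M
  rw [eventually_nhdsWithin_iff, Metric.eventually_nhds_iff] at h
  obtain ⟨ε, hε, h⟩ := h
  refine ⟨min ε r, lt_min hε hr, min_le_right _ _, fun q hq hq' => h ?_ hq⟩
  rw [Real.dist_eq, sub_zero, abs_of_pos hq]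
  exact hq'.trans_le (min_le_left _ _)

lemma exists_pos_le_of_pos {N : ℕ} (hN : 2 ≤ N) (m : Fin N → ℝ) (hm : ∀ i, 0 < m i) :
    ∃ μ > 0, ∀ i, μ ≤ m i := by
  have : Nonempty (Fin N) := ⟨⟨0, by omega⟩⟩
  obtain ⟨i, hi⟩ := Finite.exists_min m
  exact ⟨m i, hm i, hi⟩

/-- The minimal mutual distance is attained. -/
lemma sInf_dist_mem {n N : ℕ} (hN : 2 ≤ N) (u : ℝ → Fin N → EuclideanSpace ℝ (Fin n))
    (hu : Continuous u) :
    sInf {d : ℝ | ∃ i j, i ≠ j ∧ ∃ t ∈ Set.Icc (0:ℝ) 1, d = ‖u t i - u t j‖} ∈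
      {d : ℝ | ∃ i j, i ≠ j ∧ ∃ t ∈ Set.Icc (0:ℝ) 1, d = ‖u t i - u t j‖} := by
  apply IsCompact.sInf_mem
  · have : {d : ℝ | ∃ i j, i ≠ j ∧ ∃ t ∈ Set.Icc (0:ℝ) 1, d = ‖u t i - u t j‖}
        = ⋃ q ∈ {q : Fin N × Fin N | q.1 ≠ q.2},
          (fun t => ‖u t q.1 - u t q.2‖) '' Set.Icc (0:ℝ) 1 := by
      ext d
      simp only [Set.mem_ofPred_eq, Set.mem_iUnion, Set.mem_image, Prod.exists, exists_prop,
        eq_comm (a := d)]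
    rw [this]
    refine (Set.toFinite _).isCompact_biUnion fun q _ => isCompact_Icc.image ?_
    fun_prop
  · exact ⟨_, ⟨0, by omega⟩, ⟨1, by omega⟩, by simp, 0, by simp, rfl⟩

/-- **Lemma 3.2**: on each sublevel set `{f ≤ λ}` of the fixed-energy functional, the
norm `‖u‖` is controlled by a uniform multiple of the minimal mutual distance `p(u)`. -/
theorem norm_controlled_by_min_distance
    (n N : ℕ) (hN : 2 ≤ N)
    (m : Fin N → ℝ) (hm : ∀ i, 0 < m i)
    (h : ℝ) (hh : 0 < h)
    (V : Fin N → Fin N → EuclideanSpace ℝ (Fin n) → ℝ)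
    (hV_C1 : ∀ i j, i ≠ j → ContDiffOn ℝ 1 (V i j) {ξ | ξ ≠ 0})
    (hV_nonpos : ∀ i j, i ≠ j → ∀ ξ : EuclideanSpace ℝ (Fin n), ξ ≠ 0 → V i j ξ ≤ 0)
    (α : ℝ) (hα : 2 < α) (A : ℝ) (hA : 0 < A) (r₁ : ℝ) (hr₁ : 0 < r₁)
    (hV_sf : ∀ i j, i ≠ j → ∀ ξ : EuclideanSpace ℝ (Fin n), 0 < ‖ξ‖ → ‖ξ‖ ≤ r₁ →
      V i j ξ ≤ -A * ‖ξ‖ ^ (-α))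
    (Vtot : (Fin N → EuclideanSpace ℝ (Fin n)) → ℝ)
    (hVtot : ∀ X, Vtot X =
      (1/2) * ∑ i, ∑ j ∈ univ.filter (fun j => j ≠ i), V i j (X i - X j))
    (f : (ℝ → Fin N → EuclideanSpace ℝ (Fin n)) → ℝ)
    (hf : ∀ w : ℝ → Fin N → EuclideanSpace ℝ (Fin n), f w =
      (1/2) * (∫ t in (0:ℝ)..1, ∑ i, m i * ‖deriv (fun s => w s i) t‖ ^ 2)
        * (∫ t in (0:ℝ)..1, (h - Vtot (w t))))
    (lam : ℝ) :
    ∃ k > (0:ℝ), ∀ u : ℝ → Fin N → EuclideanSpace ℝ (Fin n),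
      ContDiff ℝ 1 u →
      (∀ t : ℝ, u (t + 1) = u t) →
      (∀ t : ℝ, ∀ i, u (t + 1/2) i = -u t i) →
      (∀ t : ℝ, ∀ i j, i ≠ j → u t i ≠ u t j) →
      f u ≤ lam →
      Real.sqrt (∫ t in (0:ℝ)..1, ∑ i, m i * ‖deriv (fun s => u s i) t‖ ^ 2)
        ≤ k * sInf {d : ℝ | ∃ i j, i ≠ j ∧ ∃ t ∈ Set.Icc (0:ℝ) 1,
            d = ‖u t i - u t j‖} := by
  obtain ⟨μ, hμ, hμm⟩ := exists_pos_le_of_pos hN m hm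
  -- `|u̇ᵢ - u̇ⱼ|² ≤ 2 (|u̇ᵢ|² + |u̇ⱼ|²)`, and each squared speed is at most `(Σ mₖ |u̇ₖ|²) / μ`.
  set C : ℝ := 4 / μ with hCdef
  have hC : 0 < C := by positivity
  obtain ⟨q₀, hq₀, hq₀r, hq₀M⟩ :=
    exists_forall_lt_rpow (2 - α) (16 * C * lam / A) r₁ (by linarith) hr₁
  refine ⟨√(1 / C) + √(2 * |lam| / h) / (q₀ / 2) + 1, by positivity, ?_⟩
  intro u hu hper _ hcol hfu
  have hui : ∀ i, ContDiff ℝ 1 (fun s => u s i) := fun i => contDiff_pi.mp hu i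
  obtain ⟨i, j, hij, t₀, -, hpeq⟩ := sInf_dist_mem hN u hu.continuous
  rw [hpeq]
  set g : ℝ → ℝ := fun t => ∑ i, m i * ‖deriv (fun s => u s i) t‖ ^ 2 with hgdef
  set G : ℝ → ℝ := fun t => h - Vtot (u t) with hGdef
  have hderc : ∀ i, Continuous (deriv (fun s => u s i)) :=
    fun i => (hui i).continuous_deriv le_rfl
  have hg : Continuous g := by
    refine continuous_finsetSum _ fun i _ => ?_
    exact continuous_const.mul ((hderc i).norm.pow 2)
  have hterm : ∀ i t, 0 ≤ m i * ‖deriv (fun s => u s i) t‖ ^ 2 :=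
    fun i t => mul_nonneg (hm i).le (sq_nonneg _)
  have hg0 : ∀ t, 0 ≤ g t := fun t => Finset.sum_nonneg fun i _ => hterm i t
  have hgper : Function.Periodic g 1 := by
    intro t
    simp only [hgdef]
    refine Finset.sum_congr rfl fun i _ => ?_
    rw [← deriv_comp_add_const]
    simp only [hper]
  have hGper : Function.Periodic G 1 := fun t => by simp only [hGdef, hper]
  have hVc : ∀ i j, i ≠ j → Continuous fun t => V i j (u t i - u t j) := by
    intro i j hij
    refine (hV_C1 i j hij).continuousOn.comp_continuous
      ((hui i).continuous.sub (hui j).continuous) fun t => ?_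
    exact sub_ne_zero.mpr (hcol t i j hij)
  have hG : Continuous G := by
    simp only [hGdef, hVtot]
    refine continuous_const.sub (continuous_const.mul ?_)
    refine continuous_finsetSum _ fun i _ => continuous_finsetSum _ fun j hj => hVc i j ?_
    exact (Finset.mem_filter.mp hj).2.symm
  have hVle : ∀ t i j, i ≠ j → V i j (u t i - u t j) ≤ 0 := fun t i j hij =>
    hV_nonpos i j hij _ (sub_ne_zero.mpr (hcol t i j hij))
  have hinner : ∀ t i, ∑ j ∈ univ.filter (fun j => j ≠ i), V i j (u t i - u t j) ≤ 0 :=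
    fun t i => Finset.sum_nonpos fun j hj => hVle t i j (Finset.mem_filter.mp hj).2.symm
  have hGh : ∀ t, h ≤ G t := by
    intro t
    have := Finset.sum_nonpos fun i (_ : i ∈ univ) => hinner t i
    simp only [hGdef, hVtot]
    linarith
  -- All pair potentials are nonpositive, so the single ordered pair `(i, j)` bounds `-Vtot` below.
  have hGij : ∀ t, -(1 / 2) * V i j (u t i - u t j) ≤ G t := by
    intro t
    have h1 : ∑ a, ∑ b ∈ univ.filter (fun b => b ≠ a), V a b (u t a - u t b)
        ≤ ∑ b ∈ univ.filter (fun b => b ≠ i), V i b (u t i - u t b) := by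
      have := Finset.single_le_sum (f := fun a => -∑ b ∈ univ.filter (fun b => b ≠ a),
        V a b (u t a - u t b)) (fun a _ => neg_nonneg.mpr (hinner t a)) (Finset.mem_univ i)
      rw [Finset.sum_neg_distrib] at this
      exact neg_le_neg_iff.mp this
    have h2 : ∑ b ∈ univ.filter (fun b => b ≠ i), V i b (u t i - u t b)
        ≤ V i j (u t i - u t j) := by
      have := Finset.single_le_sum (s := univ.filter (fun b => b ≠ i))
        (f := fun b => -V i b (u t i - u t b))
        (fun b hb => neg_nonneg.mpr (hVle t i b (Finset.mem_filter.mp hb).2.symm))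
        (Finset.mem_filter.mpr ⟨Finset.mem_univ j, hij.symm⟩)
      rw [Finset.sum_neg_distrib] at this
      exact neg_le_neg_iff.mp this
    simp only [hGdef, hVtot]
    linarith
  set E := ∫ t in (0:ℝ)..1, g t with hEdef
  set p := ‖u t₀ i - u t₀ j‖ with hpdef
  have hp : 0 < p := norm_pos_iff.mpr (sub_ne_zero.mpr (hcol t₀ i j hij))
  have hE0 : 0 ≤ E := intervalIntegral.integral_nonneg zero_le_one fun t _ => hg0 t
  have hact : 1 / 2 * E * (∫ t in (0:ℝ)..1, G t) ≤ lam := by rw [← hf u]; exact hfu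
  have hEle : E ≤ 2 * |lam| / h := by
    have hI : h ≤ ∫ t in (0:ℝ)..1, G t := by
      have := intervalIntegral.integral_mono_on (μ := MeasureTheory.volume) (zero_le_one' ℝ)
        (continuous_const.intervalIntegrable 0 1) (hG.intervalIntegrable 0 1)
        (fun t _ => hGh t)
      simpa using this
    rw [le_div_iff₀ hh]
    have := mul_le_mul_of_nonneg_left hI hE0
    linarith [le_abs_self lam]
  have hsum : 0 ≤ √(1 / C) * p := by positivity
  have hsum' : 0 ≤ √(2 * |lam| / h) / (q₀ / 2) * p := by positivity
  rw [add_mul, add_mul, one_mul]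
  by_cases hpE : C * E ≤ p ^ 2
  · have : √E ≤ √(1 / C) * p := by
      rw [Real.sqrt_le_left (by positivity), mul_pow, Real.sq_sqrt (by positivity),
        one_div_mul_eq_div, le_div_iff₀ hC]
      linarith
    linarith
  by_cases hpq : q₀ / 2 ≤ p
  · have : √E ≤ √(2 * |lam| / h) / (q₀ / 2) * p := by
      calc √E ≤ √(2 * |lam| / h) := Real.sqrt_le_sqrt hEle
        _ = √(2 * |lam| / h) / (q₀ / 2) * (q₀ / 2) := by field_simp
        _ ≤ _ := by gcongr
    linarith
  exfalso
  rw [not_le] at hpE hpq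
  have hE : 0 < E := pos_of_mul_pos_right ((sq_nonneg p).trans_lt hpE) hC.le
  refine absurd (hq₀M (2 * p) (by positivity) (by linarith)) (not_lt.mpr ?_)
  have hshift : ∀ F : ℝ → ℝ, Function.Periodic F 1 →
      ∫ t in t₀..(t₀ + 1), F t = ∫ t in (0:ℝ)..1, F t := by
    intro F hF
    have := hF.intervalIntegral_add_eq t₀ 0
    rwa [zero_add] at this
  refine rpow_bound_of_action_le (fun t => u t i - u t j) ((hui i).sub (hui j))
    (fun t => sub_ne_zero.mpr (hcol t i j hij)) g G hg hg0 hG (fun t => hh.le.trans (hGh t))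
    A α r₁ C E lam t₀ hα hA hC hE ?_ ?_ (hshift g hgper) ?_ (by linarith) hpE
  · intro t
    have hd : deriv (fun t => u t i - u t j) t
        = deriv (fun s => u s i) t - deriv (fun s => u s j) t :=
      deriv_fun_sub ((hui i).differentiable one_ne_zero).differentiableAt
        ((hui j).differentiable one_ne_zero).differentiableAt
    have hb : ∀ a, μ * ‖deriv (fun s => u s a) t‖ ^ 2 ≤ g t := by
      intro a
      refine le_trans (mul_le_mul_of_nonneg_right (hμm a) (sq_nonneg _)) ?_
      exact Finset.single_le_sum (f := fun a => m a * ‖deriv (fun s => u s a) t‖ ^ 2)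
        (fun b _ => hterm b t) (Finset.mem_univ a)
    rw [hd, hCdef, div_mul_eq_mul_div, le_div_iff₀ hμ]
    have hn := norm_sub_le (deriv (fun s => u s i) t) (deriv (fun s => u s j) t)
    have hsq := pow_le_pow_left₀ (norm_nonneg _) hn 2
    have hy : (‖deriv (fun s => u s i) t‖ + ‖deriv (fun s => u s j) t‖) ^ 2
        ≤ 2 * (‖deriv (fun s => u s i) t‖ ^ 2 + ‖deriv (fun s => u s j) t‖ ^ 2) := add_sq_le
    have := mul_le_mul_of_nonneg_right (hsq.trans hy) hμ.le
    linarith [hb i, hb j]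
  · intro t ht
    have h1 := hV_sf i j hij (u t i - u t j)
      (norm_pos_iff.mpr (sub_ne_zero.mpr (hcol t i j hij))) ht
    have h2 := hGij t
    linarith
  · rw [hshift G hGper]
    exact hact
end
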